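/- arXiv:1403.1802 — 2 statements merged into one kernel-verified Lean document; each statement's English description precedes it below -/
import Mathlib

section
/- Let F be a field of characteristic 2, K = F(√a₁,…,√aₙ) with a₁,…,aₙ ∈ F*, and L = K(℘⁻¹(b)) for some b ∈ F, where ℘⁻¹(b) denotes a root of X² + X + b. Then W_q(L/F) = W(F) ⊗ [1,b] + Σ_{i=1}^n ⟨1,aᵢ⟩_b ⊗ W_q(F). -/
/-!  A concrete coefficient-matrix model of (possibly singular) finite-dimensional
quadratic forms over a field, suitable for characteristic 2. -/

/-- Coefficient representation of a (finite-dimensional) quadratic form over a field `F`: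
the form of dimension `dim` given by `q(x) = ∑ i j, c i j * x i * x j`. -/
structure QF (F : Type*) [Field F] : Type _ where
  dim : ℕ
  c : Matrix (Fin dim) (Fin dim) F

namespace QF

variable {F E : Type*} [Field F] [Field E]

/-- Evaluation of the quadratic form at a vector. -/
def eval (q : QF F) (x : Fin q.dim → F) : F :=
  ∑ i, ∑ j, q.c i j * x i * x j

/-- Scalar extension (base change) of a quadratic form along a ring homomorphism. -/
def map (f : F →+* E) (q : QF F) : QF E :=
  ⟨q.dim, fun i j => f (q.c i j)⟩

/-- Orthogonal sum. -/
def orthSum (q q' : QF F) : QF F :=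
  ⟨q.dim + q'.dim,
    Matrix.reindex finSumFinEquiv finSumFinEquiv (Matrix.fromBlocks q.c 0 0 q'.c)⟩

/-- Scaling `a • q`. -/
def smul (a : F) (q : QF F) : QF F := ⟨q.dim, a • q.c⟩

/-- The nonsingular binary quadratic form `[a,b] : (x,y) ↦ ax² + xy + by²`. -/
def bin (a b : F) : QF F := ⟨2, !![a, 1; 0, b]⟩

/-- The diagonal (totally singular) quadratic form `⟨a₁, …, aₙ⟩`. -/
def diag {n : ℕ} (v : Fin n → F) : QF F := ⟨n, Matrix.diagonal v⟩

/-- The zero-dimensional quadratic form. -/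
def nil : QF F := { dim := 0, c := 0 }

/-- The one-dimensional form `⟨1⟩`. -/
def unit : QF F := diag (fun _ : Fin 1 => (1 : F))

/-- Orthogonal sum of a list of forms. -/
def sumList (l : List (QF F)) : QF F := l.foldr orthSum nil

/-- `pfTensor [a₁,…,aₙ] q` is the tensor product `⟨⟨a₁,…,aₙ⟩⟩_b ⊗ q` of the bilinear
Pfister form `⟨⟨a₁,…,aₙ⟩⟩_b = ⟨1,a₁⟩_b ⊗ ⋯ ⊗ ⟨1,aₙ⟩_b` with the quadratic form `q`,
via `⟨1,a⟩_b ⊗ q ≅ q ⊥ a·q`. -/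
def pfTensor (l : List F) (q : QF F) : QF F :=
  l.foldr (fun a r => orthSum r (smul a r)) q

/-- The hyperbolic plane `ℍ ≅ [0,0]`. -/
def hypPlane : QF F := bin 0 0

/-- The orthogonal sum of `k` hyperbolic planes. -/
def hyp (k : ℕ) : QF F := sumList (List.replicate k hypPlane)

/-- The `l`-dimensional zero form `⟨0,…,0⟩`. -/
def zeros (l : ℕ) : QF F := diag (fun _ : Fin l => (0 : F))

/-- Isometry of quadratic forms. -/
def Isometric (q q' : QF F) : Prop :=
  ∃ e : (Fin q.dim → F) ≃ₗ[F] (Fin q'.dim → F), ∀ x, q'.eval (e x) = q.eval x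

/-- Anisotropy: the form has no nontrivial zero. -/
def Anisotropic (q : QF F) : Prop := ∀ x, q.eval x = 0 → x = 0

/-- A quadratic form is nonsingular if the radical of its polar form
`B_q(x,y) = q(x+y) - q(x) - q(y)` (with matrix `c + cᵀ`) is trivial. -/
def Nonsingular (q : QF F) : Prop := ∀ x, (q.c + q.c.transpose).mulVec x = 0 → x = 0

/-- A quadratic form is totally singular if its polar form vanishes identically. -/
def TotallySingular (q : QF F) : Prop := q.c + q.c.transpose = 0

/-- A quadratic form is hyperbolic if it is isometric to an orthogonal sum of
hyperbolic planes. -/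
def Hyperbolic (q : QF F) : Prop := ∃ k, Isometric q (hyp k)

/-- Witt equivalence: `q ~ q'` iff the anisotropic parts agree, equivalently the two
forms become isometric after adding suitable numbers of hyperbolic planes and zero
forms. -/
def WittEquiv (q q' : QF F) : Prop :=
  ∃ k k' l l', Isometric (orthSum q (orthSum (hyp k) (zeros l)))
    (orthSum q' (orthSum (hyp k') (zeros l')))

/-- `AnisoPartOf φ q` : `φ` is (isometric to) the anisotropic part of `q`, i.e. `φ` is
anisotropic and `q ≅ k × ℍ ⊥ φ ⊥ ⟨0,…,0⟩`. -/
def AnisoPartOf (φ q : QF F) : Prop :=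
  Anisotropic φ ∧ ∃ k l, Isometric q (orthSum (hyp k) (orthSum φ (zeros l)))

/-- `Dominates q' q` means `q ≺ q'`, i.e. `q'` dominates `q`: there is an injective
linear map `t` of the underlying spaces with `q' ∘ t = q`. -/
def Dominates (q' q : QF F) : Prop :=
  ∃ t : (Fin q.dim → F) →ₗ[F] (Fin q'.dim → F), Function.Injective t ∧
    ∀ x, q'.eval (t x) = q.eval x

/-- The affine quadric polynomial `∑ cᵢⱼ XᵢXⱼ` of a quadratic form. -/
noncomputable def toPoly (q : QF F) : MvPolynomial (Fin q.dim) F :=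
  ∑ i, ∑ j, MvPolynomial.C (q.c i j) * (MvPolynomial.X i * MvPolynomial.X j)

/-- The affine coordinate ring of the (reduced) quadric `q = 0`. -/
abbrev CoordRing (q : QF F) : Type _ :=
  MvPolynomial (Fin q.dim) F ⧸ (Ideal.span {q.toPoly}).radical

/-- The function field of the quadric `q = 0` (assuming the quadric is integral). -/
abbrev FunctionField (q : QF F) [IsDomain (CoordRing q)] : Type _ :=
  FractionRing (CoordRing q)

/-- The canonical ring homomorphism from a base field `F` into the function field of a
quadric defined over an extension field `K` of `F`. -/
noncomputable def toFunctionField {K : Type*} [Field K] [Algebra F K] (q : QF K)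
    [IsDomain (CoordRing q)] : F →+* FunctionField q :=
  (algebraMap (CoordRing q) (FunctionField q)).comp
    ((algebraMap K (CoordRing q)).comp (algebraMap F K))

end QF


namespace WK
open Module

section Met
variable {F : Type*} [Field F] {V V' : Type*} [AddCommGroup V] [Module F V]
  [AddCommGroup V'] [Module F V']

/-- `Q` has a totally isotropic subspace of at least half the dimension. -/
def Met (Q : QuadraticForm F V) : Prop :=
  ∃ S : Submodule F V, (∀ x ∈ S, Q x = 0) ∧ finrank F V ≤ 2 * finrank F S

/-- The polar form has trivial radical. -/
def Nondeg (Q : QuadraticForm F V) : Prop :=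
  ∀ x, (∀ y, QuadraticMap.polar Q x y = 0) → x = 0

theorem Met.transfer {Q : QuadraticForm F V} {Q' : QuadraticForm F V'} (h : Met Q)
    (g : V →ₗ[F] V') (hg : Function.Injective g) (hd : finrank F V' ≤ finrank F V)
    (hQ : ∀ x, Q' (g x) = Q x) : Met Q' := by
  obtain ⟨S, hS, hS'⟩ := h
  refine ⟨S.map g, ?_, ?_⟩
  · rintro _ ⟨x, hx, rfl⟩
    rw [hQ, hS x hx]
  · rw [← (Submodule.equivMapOfInjective g hg S).finrank_eq]
    omega

theorem Met.iso {Q : QuadraticForm F V} {Q' : QuadraticForm F V'} (h : Met Q)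
    (e : Q.IsometryEquiv Q') : Met Q' :=
  h.transfer (e.toLinearEquiv : V →ₗ[F] V') e.toLinearEquiv.injective
    (e.toLinearEquiv.finrank_eq.ge) (fun x => e.map_app x)

theorem Met.of_map (Q : QuadraticForm F V) {k : ℕ} (g : (Fin k → F) →ₗ[F] V)
    (hg : Function.Injective g) (hQ : ∀ x, Q (g x) = 0) (hd : finrank F V ≤ 2 * k) : Met Q := by
  refine ⟨LinearMap.range g, ?_, ?_⟩
  · rintro _ ⟨x, rfl⟩
    exact hQ x
  · rw [LinearMap.finrank_range_of_inj hg]; simpa using hd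

theorem Nondeg.iso {Q : QuadraticForm F V} {Q' : QuadraticForm F V'} (h : Nondeg Q)
    (e : Q.IsometryEquiv Q') : Nondeg Q' := by
  intro x hx
  have : e.symm x = 0 := by
    apply h
    intro y
    have := hx (e y)
    unfold QuadraticMap.polar at this ⊢
    rw [← e.map_app, ← e.map_app (e.symm x), ← e.map_app y, map_add]
    simpa using this
  have h2 := congrArg e this
  simpa using h2

theorem polar_prod (Q : QuadraticForm F V) (Q' : QuadraticForm F V') (x y : V × V') :
    QuadraticMap.polar (Q.prod Q') x y =
      QuadraticMap.polar Q x.1 y.1 + QuadraticMap.polar Q' x.2 y.2 := by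
  simp [QuadraticMap.polar]; ring

theorem Nondeg.prod {Q : QuadraticForm F V} {Q' : QuadraticForm F V'} (h : Nondeg Q)
    (h' : Nondeg Q') : Nondeg (Q.prod Q') := by
  rintro ⟨x, x'⟩ hx
  have h1 : x = 0 := h _ fun y => by simpa [polar_prod, QuadraticMap.polar] using hx (y, 0)
  have h2 : x' = 0 := h' _ fun y => by simpa [polar_prod, QuadraticMap.polar] using hx (0, y)
  simp [h1, h2]

theorem Nondeg.of_prod_right {Q : QuadraticForm F V} {Q' : QuadraticForm F V'}
    (h : Nondeg (Q.prod Q')) : Nondeg Q' := by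
  intro x hx
  have := h (0, x) (fun y => by rw [polar_prod]; simp [hx])
  exact (Prod.ext_iff.1 this).2

variable [FiniteDimensional F V] [FiniteDimensional F V']

theorem Met.prod {Q : QuadraticForm F V} {Q' : QuadraticForm F V'} (h : Met Q)
    (h' : Met Q') : Met (Q.prod Q') := by
  obtain ⟨S, hS, hS'⟩ := h
  obtain ⟨T, hT, hT'⟩ := h'
  have hinj : Function.Injective (LinearMap.prodMap S.subtype T.subtype) := by
    rintro ⟨x, y⟩ ⟨x', y'⟩ hxy
    simpa using hxy
  refine ⟨LinearMap.range (LinearMap.prodMap S.subtype T.subtype), ?_, ?_⟩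
  · rintro _ ⟨⟨x, y⟩, rfl⟩
    simp [hS x x.2, hT y y.2]
  · rw [LinearMap.finrank_range_of_inj hinj, finrank_prod, finrank_prod]; omega

/-- Witt cancellation of metabolic nondegenerate forms. -/
theorem Met.cancel {Q : QuadraticForm F V} {Q' : QuadraticForm F V'} (hN : Nondeg Q)
    (h : Met Q) (hp : Met (Q.prod Q')) : Met Q' := by
  obtain ⟨T, hT, hT'⟩ := h
  obtain ⟨S, hS, hS'⟩ := hp
  have hinj : Function.Injective (QuadraticMap.polarBilin Q) := by
    rw [injective_iff_map_eq_zero]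
    intro x hx
    apply hN
    intro y
    have := LinearMap.congr_fun hx y
    simpa using this
  have hTT : ∀ x ∈ T, ∀ y ∈ T, QuadraticMap.polar Q x y = 0 := by
    intro x hx y hy
    simp [QuadraticMap.polar, hT x hx, hT y hy, hT _ (T.add_mem hx hy)]
  have hSS : ∀ x ∈ S, ∀ y ∈ S, QuadraticMap.polar (Q.prod Q') x y = 0 := by
    intro x hx y hy
    rw [QuadraticMap.polar, hS x hx, hS y hy, hS _ (S.add_mem hx hy)]
    simp
  let D : V →ₗ[F] Dual F T := T.dualRestrict ∘ₗ QuadraticMap.polarBilin Q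
  have hDapp : ∀ x (t : T), D x t = QuadraticMap.polar Q x t := fun x t => rfl
  have hsurj : Function.Surjective (QuadraticMap.polarBilin Q) :=
    (LinearMap.injective_iff_surjective_of_finrank_eq_finrank
      (by rw [Subspace.dual_finrank_eq])).1 hinj
  have hDs : Function.Surjective D := Subspace.dualRestrict_surjective.comp hsurj
  have hDr : finrank F (LinearMap.range D) = finrank F T := by
    rw [LinearMap.range_eq_top.2 hDs, finrank_top, Subspace.dual_finrank_eq]
  have hDk := LinearMap.finrank_range_add_finrank_ker D
  have hTle : T ≤ LinearMap.ker D := by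
    intro x hx
    rw [LinearMap.mem_ker]
    ext t
    exact hTT x hx t t.2
  have hTk : T = LinearMap.ker D := by
    apply Submodule.eq_of_le_of_finrank_le hTle
    omega
  have hTd := Submodule.finrank_mono hTle
  let E : S →ₗ[F] Dual F T := D ∘ₗ LinearMap.fst F V V' ∘ₗ S.subtype
  let U : Submodule F T := (S.comap (LinearMap.inl F V V')).comap T.subtype
  have hEr : LinearMap.range E ≤ U.dualAnnihilator := by
    rintro _ ⟨s, rfl⟩
    rw [Submodule.mem_dualAnnihilator]
    intro t ht
    have h1 := hSS s s.2 ((t : V), 0) ht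
    rw [polar_prod] at h1
    have h2 : QuadraticMap.polar Q (s : V × V').1 (t : V) = 0 := by simpa using h1
    exact h2
  have hEr' := Submodule.finrank_mono hEr
  have hU := Subspace.finrank_add_finrank_dualAnnihilator_eq U
  have hEk := LinearMap.finrank_range_add_finrank_ker E
  let S' : Submodule F (V × V') := (LinearMap.ker E).map S.subtype
  have hS'f : finrank F S' = finrank F (LinearMap.ker E) :=
    (Submodule.equivMapOfInjective S.subtype S.injective_subtype (LinearMap.ker E)).finrank_eq.symm
  have hS'S : ∀ x ∈ S', x ∈ S := by
    rintro _ ⟨x, -, rfl⟩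
    exact x.2
  have hS'T : ∀ x ∈ S', x.1 ∈ T := by
    rintro _ ⟨x, hx, rfl⟩
    exact hTk.ge hx
  let p : S' →ₗ[F] V' := LinearMap.snd F V V' ∘ₗ S'.subtype
  have hpk := LinearMap.finrank_range_add_finrank_ker p
  let r : LinearMap.ker p →ₗ[F] V :=
    LinearMap.fst F V V' ∘ₗ S'.subtype ∘ₗ (LinearMap.ker p).subtype
  have hr : Function.Injective r := by
    rw [injective_iff_map_eq_zero]
    intro x hx
    have h2 : ((x : S') : V × V').2 = 0 := x.2
    have h1 : ((x : S') : V × V').1 = 0 := hx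
    apply Subtype.ext
    apply Subtype.ext
    exact Prod.ext h1 h2
  have hrU : LinearMap.range r ≤ U.map T.subtype := by
    rintro _ ⟨x, rfl⟩
    refine ⟨⟨_, hS'T _ x.1.2⟩, ?_, rfl⟩
    have h2 : ((x : S') : V × V').2 = 0 := x.2
    change (((x : S') : V × V').1, (0 : V')) ∈ S
    rw [← h2]
    exact hS'S _ x.1.2
  have hrU' := Submodule.finrank_mono hrU
  rw [LinearMap.finrank_range_of_inj hr,
    ← (Submodule.equivMapOfInjective T.subtype T.injective_subtype U).finrank_eq] at hrU'
  refine ⟨LinearMap.range p, ?_, ?_⟩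
  · rintro _ ⟨s, rfl⟩
    have h1 := hS _ (hS'S _ s.2)
    rw [QuadraticMap.prod_apply, hT _ (hS'T _ s.2), zero_add] at h1
    exact h1
  · rw [finrank_prod] at hS'
    omega

theorem Met.graph [CharP F 2] {Q : QuadraticForm F V} {Q' : QuadraticForm F V'}
    (g : V →ₗ[F] V') (hd : finrank F V' = finrank F V) (hQ : ∀ x, Q' (g x) = Q x) : Met (Q.prod Q') := by
  have hinj : Function.Injective (LinearMap.prod LinearMap.id g) := by
    intro x y hxy
    exact (Prod.ext_iff.1 hxy).1
  refine ⟨LinearMap.range (LinearMap.prod LinearMap.id g), ?_, ?_⟩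
  · rintro _ ⟨x, rfl⟩
    simp [hQ, CharTwo.add_self_eq_zero]
  · rw [LinearMap.finrank_range_of_inj hinj, finrank_prod]; omega

end Met
end WK


namespace WK
open Module

section BC
variable {F L : Type*} [Field F] [Field L] {f : F →+* L}
  {V V' : Type*} [AddCommGroup V] [Module F V] [AddCommGroup V'] [Module L V']

theorem iso_span {Q : QuadraticForm L V'} {s : Set V'} (h : ∀ x ∈ s, Q x = 0)
    (h2 : ∀ x ∈ s, ∀ y ∈ s, QuadraticMap.polar Q x y = 0) :
    ∀ x ∈ Submodule.span L s, Q x = 0 := by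
  have h3 : ∀ x ∈ Submodule.span L s, ∀ y ∈ s, QuadraticMap.polar Q x y = 0 := by
    intro x hx y hy
    induction hx using Submodule.span_induction with
    | mem x hx => exact h2 x hx y hy
    | zero => simp
    | add a b _ _ ha hb => rw [QuadraticMap.polar_add_left, ha, hb, add_zero]
    | smul c a _ ha => rw [QuadraticMap.polar_smul_left, ha, smul_zero]
  have h4 : ∀ x ∈ Submodule.span L s, ∀ y ∈ Submodule.span L s,
      QuadraticMap.polar Q x y = 0 := by
    intro x hx y hy
    induction hy using Submodule.span_induction with
    | mem y hy => exact h3 x hx y hy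
    | zero => simp
    | add a b _ _ ha hb => rw [QuadraticMap.polar_add_right, ha, hb, add_zero]
    | smul c a _ ha => rw [QuadraticMap.polar_smul_right, ha, smul_zero]
  intro x hx
  induction hx using Submodule.span_induction with
  | mem x hx => exact h x hx
  | zero => simp
  | add a b ha hb ha' hb' => rw [QuadraticMap.map_add Q, ha', hb', h4 a ha b hb]; simp
  | smul c a _ ha => rw [QuadraticMap.map_smul, ha, smul_zero]

theorem finrank_span_image_le [FiniteDimensional F V] (j : V →ₛₗ[f] V') (T : Submodule F V) :
    finrank L (Submodule.span L (j '' (T : Set V))) ≤ finrank F T := by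
  let b := Module.finBasis F T
  have : Submodule.span L (j '' (T : Set V)) ≤
      Submodule.span L (Set.range fun i => j (b i : V)) := by
    rw [Submodule.span_le]
    rintro _ ⟨x, hx, rfl⟩
    have h1 := b.sum_repr ⟨x, hx⟩
    have h2 : x = ∑ i, b.repr ⟨x, hx⟩ i • (b i : V) := by
      have := congrArg (T.subtype) h1
      simp only [map_sum, map_smul, Submodule.subtype_apply] at this
      exact this.symm
    rw [h2, map_sum]
    refine Submodule.sum_mem _ fun i _ => ?_
    rw [LinearMap.map_smulₛₗ]
    exact Submodule.smul_mem _ _ (Submodule.subset_span ⟨i, rfl⟩)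
  have hfin : FiniteDimensional L (Submodule.span L (Set.range fun i => j (b i : V))) :=
    FiniteDimensional.span_of_finite L (Set.finite_range _)
  refine (Submodule.finrank_mono this).trans ?_
  have := finrank_range_le_card (R := L) (fun i => j (b i : V))
  simpa [Set.finrank] using this

/-- Base change of metabolic forms along a semilinear map with spanning image. -/
theorem Met.baseChange [FiniteDimensional F V] [FiniteDimensional L V']
    {Q : QuadraticForm F V} {Q' : QuadraticForm L V'} (j : V →ₛₗ[f] V')
    (hj : Submodule.span L (Set.range j) = ⊤) (hd : finrank F V = finrank L V')
    (hQ : ∀ x, Q' (j x) = f (Q x)) (h : Met Q) : Met Q' := by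
  obtain ⟨S, hS, hS'⟩ := h
  obtain ⟨T, hT⟩ := S.exists_isCompl
  refine ⟨Submodule.span L (j '' (S : Set V)), ?_, ?_⟩
  · apply iso_span
    · rintro _ ⟨x, hx, rfl⟩
      rw [hQ, hS x hx, map_zero]
    · rintro _ ⟨x, hx, rfl⟩ _ ⟨y, hy, rfl⟩
      rw [QuadraticMap.polar, ← map_add, hQ, hQ, hQ, hS x hx, hS y hy, hS _ (S.add_mem hx hy)]
      simp
  · have h1 := finrank_span_image_le j T
    have h2 : Submodule.span L (j '' (S : Set V)) ⊔ Submodule.span L (j '' (T : Set V)) = ⊤ := by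
      rw [eq_top_iff, ← hj, Submodule.span_le]
      rintro _ ⟨x, rfl⟩
      have hx : x ∈ S ⊔ T := by rw [hT.sup_eq_top]; trivial
      obtain ⟨y, hy, z, hz, rfl⟩ := Submodule.mem_sup.1 hx
      rw [map_add]
      exact Submodule.add_mem_sup (Submodule.subset_span ⟨y, hy, rfl⟩)
        (Submodule.subset_span ⟨z, hz, rfl⟩)
    have h3 := Submodule.finrank_add_le_finrank_add_finrank
      (Submodule.span L (j '' (S : Set V))) (Submodule.span L (j '' (T : Set V)))
    rw [h2, finrank_top] at h3
    have h4 := Submodule.finrank_add_eq_of_isCompl hT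
    omega
end BC

section forms
variable {F : Type*} [Field F]

/-- the form `c x² + xy + d y²` on `F × F`. -/
def plane (c d : F) : QuadraticForm F (F × F) :=
  LinearMap.BilinMap.toQuadraticMap (LinearMap.mk₂ F
    (fun v w : F × F => c * v.1 * w.1 + v.1 * w.2 + d * v.2 * w.2)
    (by intros; simp; ring) (by intros; simp; ring) (by intros; simp; ring)
    (by intros; simp; ring))

@[simp] theorem plane_apply (c d : F) (v : F × F) :
    plane c d v = c * v.1 * v.1 + v.1 * v.2 + d * v.2 * v.2 := rfl

/-- the orthogonal sum of the planes `[c i, d i]`. -/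
def pform {ι : Type*} [Fintype ι] (c d : ι → F) : QuadraticForm F ((ι → F) × (ι → F)) :=
  LinearMap.BilinMap.toQuadraticMap (LinearMap.mk₂ F
    (fun v w : (ι → F) × (ι → F) =>
      ∑ i, (c i * v.1 i * w.1 i + v.1 i * w.2 i + d i * v.2 i * w.2 i))
    (by intros; rw [← Finset.sum_add_distrib]; refine Finset.sum_congr rfl fun i _ => ?_
        simp; ring)
    (by intros; rw [smul_eq_mul, Finset.mul_sum]; refine Finset.sum_congr rfl fun i _ => ?_
        simp; ring)
    (by intros; rw [← Finset.sum_add_distrib]; refine Finset.sum_congr rfl fun i _ => ?_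
        simp; ring)
    (by intros; rw [smul_eq_mul, Finset.mul_sum]; refine Finset.sum_congr rfl fun i _ => ?_
        simp; ring))

theorem pform_apply {ι : Type*} [Fintype ι] (c d : ι → F) (v : (ι → F) × (ι → F)) :
    pform c d v = ∑ i, (c i * v.1 i * v.1 i + v.1 i * v.2 i + d i * v.2 i * v.2 i) := rfl

theorem plane_polar (c d : F) [CharP F 2] (v w : F × F) :
    QuadraticMap.polar (plane c d) v w = v.1 * w.2 + w.1 * v.2 := by
  simp only [QuadraticMap.polar, plane_apply, Prod.fst_add, Prod.snd_add]
  have h2 : (2 : F) = 0 := CharTwo.two_eq_zero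
  linear_combination (c * v.1 * w.1 + d * v.2 * w.2) * h2

theorem plane_nondeg (c d : F) [CharP F 2] : Nondeg (plane c d) := by
  rintro ⟨x, y⟩ h
  have h1 := h (0, 1)
  have h2 := h (1, 0)
  rw [plane_polar] at h1 h2
  simp at h1 h2
  simp [h1, h2]

theorem plane_met_of_isotropic (c d x y : F) (hxy : (x, y) ≠ 0)
    (h : c * x * x + x * y + d * y * y = 0) : Met (plane c d) := by
  refine Met.of_map (k := 1) _ (LinearMap.toSpanSingleton F (F × F) (x, y) ∘ₗ
    LinearMap.proj 0) ?_ ?_ ?_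
  · intro u v huv
    simp only [LinearMap.comp_apply, LinearMap.proj_apply, LinearMap.toSpanSingleton_apply] at huv
    have := smul_left_injective F hxy huv
    ext i
    rw [Subsingleton.elim i 0, this]
  · intro u
    simp
    linear_combination (u 0) ^ 2 * h
  · simp

/-- `[c₀,d₀] ⊥ (⊥ [cᵢ,dᵢ])` as one form. -/
def consIso {m : ℕ} (c0 d0 : F) (c d : Fin m → F) :
    ((plane c0 d0).prod (pform c d)).IsometryEquiv
      (pform (Fin.cons c0 c : Fin (m + 1) → F) (Fin.cons d0 d : Fin (m + 1) → F)) where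
  toFun v := (Fin.cons v.1.1 v.2.1, Fin.cons v.1.2 v.2.2)
  invFun w := ((w.1 0, w.2 0), (Fin.tail w.1, Fin.tail w.2))
  left_inv v := by simp
  right_inv w := by simp
  map_add' v w := by
    ext i <;> refine Fin.cases ?_ (fun i => ?_) i <;> simp
  map_smul' a v := by
    ext i <;> refine Fin.cases ?_ (fun i => ?_) i <;> simp
  map_app' v := by
    simp [pform_apply, Fin.sum_univ_succ]

end forms
end WK


namespace WK
open Module

section decomp
variable {F : Type*} [Field F] [CharP F 2]

theorem polar_self' {V : Type*} [AddCommGroup V] [Module F V] (Q : QuadraticForm F V) (v : V) :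
    QuadraticMap.polar Q v v = 0 := by
  rw [QuadraticMap.polar_self]
  simp [CharTwo.two_eq_zero]

/-- splitting off a plane -/
theorem split_plane {V : Type*} [AddCommGroup V] [Module F V] (Q : QuadraticForm F V)
    (v w : V) (hvw : QuadraticMap.polar Q v w = 1) :
    ∃ V' : Submodule F V,
      Nonempty (((plane (Q v) (Q w)).prod (Q.comp V'.subtype)).IsometryEquiv Q) := by
  have h2 : (2 : F) = 0 := CharTwo.two_eq_zero
  let V' : Submodule F V := LinearMap.ker (QuadraticMap.polarBilin Q v) ⊓
    LinearMap.ker (QuadraticMap.polarBilin Q w)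
  have hV' : ∀ x, x ∈ V' ↔ QuadraticMap.polar Q v x = 0 ∧ QuadraticMap.polar Q w x = 0 :=
    fun x => Iff.rfl
  have hwv : QuadraticMap.polar Q w v = 1 := by rw [QuadraticMap.polar_comm, hvw]
  let g : (F × F) × V' →ₗ[F] V := LinearMap.coprod
    (LinearMap.coprod (LinearMap.toSpanSingleton F V v) (LinearMap.toSpanSingleton F V w))
    V'.subtype
  have hg : ∀ x, g x = x.1.1 • v + x.1.2 • w + x.2 := fun x => by simp [g]
  have hbij : Function.Bijective g := by
    constructor
    · rw [injective_iff_map_eq_zero]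
      rintro ⟨⟨s, t⟩, u, hu⟩ h
      rw [hg] at h
      obtain ⟨hu1, hu2⟩ := (hV' u).1 hu
      have ht : t = 0 := by
        have := congrArg (QuadraticMap.polar Q v) h
        simpa [QuadraticMap.polar_add_right, h2, hu1, hvw] using this
      have hs : s = 0 := by
        have := congrArg (QuadraticMap.polar Q w) h
        simpa [QuadraticMap.polar_add_right, h2, hu2, hwv] using this
      subst ht hs
      simp at h
      simp [h]
    · intro x
      refine ⟨((QuadraticMap.polar Q w x, QuadraticMap.polar Q v x),
        ⟨x - QuadraticMap.polar Q w x • v - QuadraticMap.polar Q v x • w, ?_⟩), ?_⟩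
      · rw [hV']
        simp [QuadraticMap.polar_sub_right, h2, hvw, hwv]
      · rw [hg]
        simp
  refine ⟨V', ⟨{ LinearEquiv.ofBijective g hbij with map_app' := ?_ }⟩⟩
  rintro ⟨⟨s, t⟩, u⟩
  obtain ⟨hu1, hu2⟩ := (hV' u).1 u.2
  change Q (g _) = _
  rw [hg]
  simp only [QuadraticMap.map_add Q, QuadraticMap.polar_add_left, QuadraticMap.polar_smul_left,
    QuadraticMap.polar_smul_right, hu1, hu2, hvw, QuadraticMap.map_smul, QuadraticMap.prod_apply,
    plane_apply, QuadraticMap.comp_apply, smul_eq_mul, Submodule.subtype_apply]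
  ring

theorem decomp_aux (N : ℕ) : ∀ {V : Type*} [AddCommGroup V] [Module F V] [FiniteDimensional F V]
    (Q : QuadraticForm F V), Nondeg Q → finrank F V = N →
    ∃ (m : ℕ) (c d : Fin m → F), Nonempty (Q.IsometryEquiv (pform c d)) ∧
      (Met Q → c = 0 ∧ d = 0) := by
  induction N using Nat.strong_induction_on with
  | _ N ih =>
  intro V _ _ _ Q hQ hN
  by_cases hN0 : N = 0
  · subst hN0
    have : Subsingleton V := finrank_zero_iff.1 hN
    refine ⟨0, Fin.elim0, Fin.elim0, ⟨⟨LinearEquiv.ofSubsingleton _ _, ?_⟩⟩, fun _ => ?_⟩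
    · intro v
      rw [Subsingleton.elim v 0]
      simp [pform_apply]
    · exact ⟨Subsingleton.elim _ _, Subsingleton.elim _ _⟩
  · have hpos : 0 < finrank F V := by omega
    have hnt : Nontrivial V := finrank_pos_iff.1 hpos
    obtain ⟨v, hv0, hv⟩ : ∃ v : V, v ≠ 0 ∧ (Met Q → Q v = 0) := by
      by_cases hM : Met Q
      · obtain ⟨S, hS, hS'⟩ := hM
        have : 0 < finrank F S := by omega
        have : Nontrivial S := finrank_pos_iff.1 this
        obtain ⟨v, hv⟩ := exists_ne (0 : S)
        exact ⟨v, by simpa using hv, fun _ => hS v v.2⟩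
      · obtain ⟨v, hv⟩ := exists_ne (0 : V)
        exact ⟨v, hv, fun h => absurd h hM⟩
    obtain ⟨w0, hw0⟩ : ∃ w, QuadraticMap.polar Q v w ≠ 0 := by
      by_contra! h
      exact hv0 (hQ v h)
    obtain ⟨w, hvw, hw⟩ : ∃ w, QuadraticMap.polar Q v w = 1 ∧ (Met Q → Q w = 0) := by
      obtain ⟨w1, h1⟩ : ∃ w1, QuadraticMap.polar Q v w1 = 1 := by
        refine ⟨(QuadraticMap.polar Q v w0)⁻¹ • w0, ?_⟩
        rw [QuadraticMap.polar_smul_right, smul_eq_mul, inv_mul_cancel₀ hw0]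
      by_cases hM : Met Q
      · refine ⟨w1 + Q w1 • v, ?_, fun _ => ?_⟩
        · rw [QuadraticMap.polar_add_right, QuadraticMap.polar_smul_right, polar_self', h1]; simp
        · rw [QuadraticMap.map_add Q, QuadraticMap.map_smul, hv hM, QuadraticMap.polar_smul_right,
            QuadraticMap.polar_comm, h1]
          simp [CharTwo.add_self_eq_zero]
      · exact ⟨w1, h1, fun h => absurd h hM⟩
    obtain ⟨V', ⟨e⟩⟩ := split_plane Q v w hvw
    have hnd : Nondeg (Q.comp V'.subtype) := (hQ.iso e.symm).of_prod_right
    have hfr : finrank F ((F × F) × V') = finrank F V := e.toLinearEquiv.finrank_eq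
    rw [finrank_prod, finrank_prod, finrank_self] at hfr
    obtain ⟨m, c, d, ⟨e'⟩, hcd⟩ := ih (finrank F V') (by omega) (Q.comp V'.subtype) hnd rfl
    refine ⟨m + 1, Fin.cons (Q v) c, Fin.cons (Q w) d, ⟨?_⟩, fun hM => ?_⟩
    · exact (e.symm.trans (QuadraticMap.IsometryEquiv.prod
        (QuadraticMap.IsometryEquiv.refl _) e')).trans (consIso _ _ _ _)
    · have h1 : Met (plane (Q v) (Q w)) :=
        plane_met_of_isotropic _ _ 1 0 (by simp) (by simp [hv hM])
      have h2 : Met (Q.comp V'.subtype) :=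
        Met.cancel (plane_nondeg _ _) h1 (hM.iso e.symm)
      obtain ⟨rfl, rfl⟩ := hcd h2
      rw [hv hM, hw hM]
      constructor <;> ext i <;> refine Fin.cases ?_ (fun i => ?_) i <;> simp

end decomp
end WK


namespace WK
open Module

section moves
variable {F : Type*} [Field F] [CharP F 2] {m : ℕ}

theorem sum_mul_self' (f : Fin m → F) : (∑ i, f i) * (∑ i, f i) = ∑ i, f i * f i := by
  exact CharTwo.sum_mul_self _ _

theorem move1 (c0 d0 : F) (c d r : Fin m → F)
    (h : Met ((plane c0 d0).prod (pform c d))) :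
    Met ((plane c0 (d0 + ∑ i, r i ^ 2 * d i)).prod (pform (fun i => c i + r i ^ 2 * c0) d)) := by
  have h2 : (2 : F) = 0 := CharTwo.two_eq_zero
  refine h.transfer
    { toFun := fun v => ((v.1.1 + ∑ i, r i * v.2.1 i, v.1.2), (v.2.1, fun i => v.2.2 i + v.1.2 * r i))
      map_add' := ?_, map_smul' := ?_ } ?_ le_rfl ?_
  · intro v w
    ext <;> simp [mul_add, Finset.sum_add_distrib] <;> ring
  · intro a v
    ext <;> simp [mul_add, Finset.mul_sum, mul_left_comm, mul_assoc]
  · rw [injective_iff_map_eq_zero]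
    rintro ⟨⟨x0, y0⟩, x, y⟩ hv
    simp only [LinearMap.coe_mk, AddHom.coe_mk, Prod.mk_eq_zero] at hv
    obtain ⟨⟨h1, rfl⟩, rfl, h4⟩ := hv
    simp at h1 h4
    simp [h1, funext_iff.1 h4, funext_iff]
  · rintro ⟨⟨x0, y0⟩, x, y⟩
    simp only [LinearMap.coe_mk, AddHom.coe_mk, QuadraticMap.prod_apply, plane_apply, pform_apply]
    have h3 := sum_mul_self' (fun i => r i * x i)
    have h4 : ∑ i, ((c i + r i ^ 2 * c0) * x i * x i + x i * (y i + y0 * r i)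
        + d i * (y i + y0 * r i) * (y i + y0 * r i)) =
        ∑ i, (c i * x i * x i + x i * y i + d i * y i * y i) +
        c0 * ∑ i, r i * x i * (r i * x i) + y0 * ∑ i, r i * x i
          + y0 ^ 2 * ∑ i, r i ^ 2 * d i := by
      simp only [Finset.mul_sum, ← Finset.sum_add_distrib]
      refine Finset.sum_congr rfl fun i _ => ?_
      linear_combination (d i * y i * y0 * r i) * h2
    rw [h4, ← h3]
    linear_combination (c0 * x0 * (∑ i, r i * x i) + c0 * (∑ i, r i * x i) ^ 2
      + y0 * (∑ i, r i * x i) + y0 ^ 2 * ∑ i, r i ^ 2 * d i) * h2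

theorem move2 (c0 d0 X0 : F) (c d X : Fin m → F)
    (h : Met ((plane c0 d0).prod (pform c d))) :
    Met ((plane c0 (d0 + X0 + X0 ^ 2 * c0 + ∑ i, X i ^ 2 * c i)).prod
      (pform c (fun i => d i + X i ^ 2 * c0))) := by
  have h2 : (2 : F) = 0 := CharTwo.two_eq_zero
  refine h.transfer
    { toFun := fun v => ((v.1.1 + X0 * v.1.2 + ∑ i, X i * v.2.2 i, v.1.2),
        (fun i => v.2.1 i + v.1.2 * X i, v.2.2))
      map_add' := ?_, map_smul' := ?_ } ?_ le_rfl ?_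
  · intro v w
    ext <;> simp [mul_add, Finset.sum_add_distrib] <;> ring
  · intro a v
    ext <;> simp [mul_add, Finset.mul_sum, mul_left_comm, mul_assoc]
  · rw [injective_iff_map_eq_zero]
    rintro ⟨⟨x0, y0⟩, x, y⟩ hv
    simp only [LinearMap.coe_mk, AddHom.coe_mk, Prod.mk_eq_zero] at hv
    obtain ⟨⟨h1, rfl⟩, h4, rfl⟩ := hv
    simp at h1 h4
    simp [h1, funext_iff]
    exact fun i => congrFun h4 i
  · rintro ⟨⟨x0, y0⟩, x, y⟩
    simp only [LinearMap.coe_mk, AddHom.coe_mk, QuadraticMap.prod_apply, plane_apply, pform_apply]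
    have h3 := sum_mul_self' (fun i => X i * y i)
    have h4 : ∑ i, (c i * (x i + y0 * X i) * (x i + y0 * X i) + (x i + y0 * X i) * y i
        + (d i + X i ^ 2 * c0) * y i * y i) =
        ∑ i, (c i * x i * x i + x i * y i + d i * y i * y i) +
        c0 * ∑ i, X i * y i * (X i * y i) + y0 * ∑ i, X i * y i
          + y0 ^ 2 * ∑ i, X i ^ 2 * c i := by
      simp only [Finset.mul_sum, ← Finset.sum_add_distrib]
      refine Finset.sum_congr rfl fun i _ => ?_
      linear_combination (c i * x i * y0 * X i) * h2
    rw [h4, ← h3]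
    linear_combination (c0 * x0 * (∑ i, X i * y i) + c0 * x0 * X0 * y0
      + c0 * X0 * y0 * (∑ i, X i * y i) + c0 * X0 ^ 2 * y0 ^ 2 + X0 * y0 ^ 2
      + c0 * (∑ i, X i * y i) ^ 2
      + y0 * (∑ i, X i * y i) + y0 ^ 2 * ∑ i, X i ^ 2 * c i) * h2

theorem move3 (c0 d0 : F) (c d r : Fin m → F)
    (h : Met ((plane c0 d0).prod (pform c d))) :
    Met ((plane (c0 + ∑ i, r i ^ 2 * c i) d0).prod (pform c (fun i => d i + r i ^ 2 * d0))) := by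
  have h2 : (2 : F) = 0 := CharTwo.two_eq_zero
  refine h.transfer
    { toFun := fun v => ((v.1.1, v.1.2 + ∑ i, r i * v.2.2 i),
        (fun i => v.2.1 i + v.1.1 * r i, v.2.2))
      map_add' := ?_, map_smul' := ?_ } ?_ le_rfl ?_
  · intro v w
    ext <;> simp [mul_add, Finset.sum_add_distrib] <;> ring
  · intro a v
    ext <;> simp [mul_add, Finset.mul_sum, mul_left_comm, mul_assoc]
  · rw [injective_iff_map_eq_zero]
    rintro ⟨⟨x0, y0⟩, x, y⟩ hv
    simp only [LinearMap.coe_mk, AddHom.coe_mk, Prod.mk_eq_zero] at hv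
    obtain ⟨⟨rfl, h1⟩, h4, rfl⟩ := hv
    simp at h1 h4
    simp [h1, funext_iff]
    exact fun i => congrFun h4 i
  · rintro ⟨⟨x0, y0⟩, x, y⟩
    simp only [LinearMap.coe_mk, AddHom.coe_mk, QuadraticMap.prod_apply, plane_apply, pform_apply]
    have h3 := sum_mul_self' (fun i => r i * y i)
    have h4 : ∑ i, (c i * (x i + x0 * r i) * (x i + x0 * r i) + (x i + x0 * r i) * y i
        + (d i + r i ^ 2 * d0) * y i * y i) =
        ∑ i, (c i * x i * x i + x i * y i + d i * y i * y i) +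
        d0 * ∑ i, r i * y i * (r i * y i) + x0 * ∑ i, r i * y i
          + x0 ^ 2 * ∑ i, r i ^ 2 * c i := by
      simp only [Finset.mul_sum, ← Finset.sum_add_distrib]
      refine Finset.sum_congr rfl fun i _ => ?_
      linear_combination (c i * x i * x0 * r i) * h2
    rw [h4, ← h3]
    linear_combination (d0 * y0 * (∑ i, r i * y i) + d0 * (∑ i, r i * y i) ^ 2
      + x0 * (∑ i, r i * y i) + x0 ^ 2 * ∑ i, r i ^ 2 * c i) * h2

end moves

section movesB
variable {F : Type*} [Field F] {m : ℕ}

theorem met_cons (c d : Fin (m + 1) → F) (h : Met (pform c d)) :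
    Met ((plane (c 0) (d 0)).prod (pform (fun i : Fin m => c i.succ) (fun i : Fin m => d i.succ))) := by
  have h1 := Fin.cons_self_tail c
  have h2 := Fin.cons_self_tail d
  rw [← h1, ← h2] at h
  exact h.iso (consIso _ _ _ _).symm

theorem met_reindex (σ : Equiv.Perm (Fin m)) (c d : Fin m → F) (h : Met (pform c d)) :
    Met (pform (fun i => c (σ i)) (fun i => d (σ i))) := by
  refine h.transfer
    { toFun := fun v => (fun i => v.1 (σ i), fun i => v.2 (σ i))
      map_add' := ?_, map_smul' := ?_ } ?_ le_rfl ?_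
  · intro v w; rfl
  · intro v w; rfl
  · rintro ⟨x, y⟩ ⟨x', y'⟩ hv
    simp only [LinearMap.coe_mk, AddHom.coe_mk, Prod.mk.injEq] at hv
    obtain ⟨h1, h2⟩ := hv
    ext i
    · simpa using congrFun h1 (σ.symm i)
    · simpa using congrFun h2 (σ.symm i)
  · rintro ⟨x, y⟩
    simp only [LinearMap.coe_mk, AddHom.coe_mk, pform_apply]
    exact Equiv.sum_comp σ (fun i => c i * x i * x i + x i * y i + d i * y i * y i)

theorem pform_polar [CharP F 2] {ι : Type*} [Fintype ι] (c d : ι → F) (v w : (ι → F) × (ι → F)) :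
    QuadraticMap.polar (pform c d) v w = ∑ i, (v.1 i * w.2 i + w.1 i * v.2 i) := by
  simp only [QuadraticMap.polar, pform_apply, ← Finset.sum_sub_distrib]
  refine Finset.sum_congr rfl fun i _ => ?_
  have h2 : (2 : F) = 0 := CharTwo.two_eq_zero
  simp only [Prod.fst_add, Prod.snd_add, Pi.add_apply]
  linear_combination (c i * v.1 i * w.1 i + d i * v.2 i * w.2 i) * h2

end movesB
end WK


namespace WK
open Module

section thmM
variable {F K L : Type*} [Field F] [Field K] [Field L] [Algebra F K] [Algebra K L]

/-- Abstract data for the main induction. -/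
structure LamData (F K W : Type*) [Field F] [Field K] [Algebra F K] [AddCommGroup W]
    (φ : K →+* F) (b : F) where
  lam : F →+ K →+ W
  two : ∀ w : W, w + w = 0
  h1 : ∀ c d r, lam (c * φ r) d = lam c (r ^ 2 * d)
  h2 : ∀ c c' r, lam c (r ^ 2 * algebraMap F K c') = lam c' (r ^ 2 * algebraMap F K c)
  h3 : ∀ c x, lam c (x + x ^ 2 * algebraMap F K c) = 0
  h4 : ∀ c, c ≠ 0 → lam c (algebraMap F K b / algebraMap F K c) = 0

/-- The form over `L` -/
def LF (L : Type*) [Field L] [Algebra K L] {m : ℕ} (c : Fin m → F) (d : Fin m → K) :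
    QuadraticForm L ((Fin m → L) × (Fin m → L)) :=
  pform (fun i => algebraMap K L (algebraMap F K (c i))) (fun i => algebraMap K L (d i))

variable {W : Type*} [AddCommGroup W] {φ : K →+* F} {b : F}
  [CharP K 2] [CharP L 2]

theorem stepA (D : LamData F K W φ b) (hφ : ∀ t, algebraMap F K (φ t) = t ^ 2) {m : ℕ}
    (ih : ∀ (c : Fin m → F) (d : Fin m → K), Met (LF L c d) → ∑ i, D.lam (c i) (d i) = 0)
    (c : Fin (m + 1) → F) (d : Fin (m + 1) → K) (hM : Met (LF L c d))
    (x y : Fin (m + 1) → K) (hy : y 0 = 1) (δ : K)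
    (hδ : pform (fun i => algebraMap F K (c i)) d (x, y) = δ)
    (hl : D.lam (c 0) δ = 0)
    (hp : Met (plane (algebraMap K L (algebraMap F K (c 0))) (algebraMap K L δ))) :
    ∑ i, D.lam (c i) (d i) = 0 := by
  have h2 : (2 : K) = 0 := CharTwo.two_eq_zero
  let ι := algebraMap K L
  let j := algebraMap F K
  let r : Fin m → K := fun i => y i.succ
  let X : Fin m → K := fun i => x i.succ
  let cc : Fin m → F := fun i => c i.succ
  let dd : Fin m → K := fun i => d i.succ
  let X0 : K := x 0 + ∑ i, r i * X i
  have hX0 : X0 ^ 2 = x 0 ^ 2 + ∑ i, r i ^ 2 * X i ^ 2 := by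
    have := sum_mul_self' (fun i => r i * X i)
    have e : ∑ i, r i * X i * (r i * X i) = ∑ i, r i ^ 2 * X i ^ 2 :=
      Finset.sum_congr rfl fun i _ => by ring
    rw [e] at this
    simp only [X0]
    linear_combination this + (x 0 * ∑ i, r i * X i) * h2
  have hδ' : δ = d 0 + ∑ i, r i ^ 2 * dd i + X0 + X0 ^ 2 * j (c 0) +
      ∑ i, X i ^ 2 * (j (cc i) + r i ^ 2 * j (c 0)) := by
    rw [hX0, ← hδ, pform_apply, Fin.sum_univ_succ]
    simp only [hy]
    have e : ∑ i : Fin m, (j (c i.succ) * x i.succ * x i.succ + x i.succ * y i.succ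
       + d i.succ * y i.succ * y i.succ) = ∑ i, r i ^ 2 * dd i + ∑ i, r i * X i +
        ∑ i, X i ^ 2 * (j (cc i) + r i ^ 2 * j (c 0)) + (∑ i, r i ^ 2 * X i ^ 2) * j (c 0) := by
      simp only [Finset.sum_mul, ← Finset.sum_add_distrib]
      refine Finset.sum_congr rfl fun i _ => ?_
      simp only [r, X, cc, dd]
      linear_combination -(x i.succ ^ 2 * y i.succ ^ 2 * j (c 0)) * h2
    rw [e]
    simp only [X0]
    ring
  have m1 := met_cons _ _ hM
  have m2 := move1 _ _ _ _ (fun i => ι (r i)) m1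
  have m3 := move2 _ _ (ι X0) _ _ (fun i => ι (X i)) m2
  have m4 : Met ((plane (ι (j (c 0))) (ι δ)).prod
      (LF L (fun i => cc i + c 0 * φ (r i)) (fun i => dd i + X i ^ 2 * j (c 0)))) := by
    convert m3 using 3
    · rw [hδ']
      simp only [map_add, map_sum, map_mul, map_pow]
      rfl
    · simp only [LF, map_add, map_mul, hφ, map_pow]
      congr 1
      funext i
      simp only [mul_comm, cc, ι]
  have m5 := ih _ _ (Met.cancel (plane_nondeg _ _) hp m4)
  have e1 : ∀ i, D.lam (cc i + c 0 * φ (r i)) (dd i + X i ^ 2 * j (c 0)) =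
      D.lam (cc i) (dd i) +
        D.lam (c 0) (r i ^ 2 * dd i + X i ^ 2 * (j (cc i) + r i ^ 2 * j (c 0))) := by
    intro i
    have e2 := D.h2 (cc i) (c 0) (X i)
    have e3 := D.h1 (c 0) (dd i + X i ^ 2 * j (c 0)) (r i)
    have e4 : r i ^ 2 * dd i + X i ^ 2 * (j (cc i) + r i ^ 2 * j (c 0)) =
      r i ^ 2 * (dd i + X i ^ 2 * j (c 0)) + X i ^ 2 * j (cc i) := by ring
    rw [map_add D.lam, AddMonoidHom.add_apply, e3, map_add (D.lam (cc i)), e2, e4,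
      map_add (D.lam (c 0))]
    abel
  simp only [e1] at m5
  rw [Finset.sum_add_distrib, ← map_sum, Finset.sum_add_distrib] at m5
  have e5 := D.h3 (c 0) X0
  rw [Fin.sum_univ_succ]
  have e6 : ∑ i, r i ^ 2 * dd i + ∑ i, X i ^ 2 * (j (cc i) + r i ^ 2 * j (c 0)) =
    δ - d 0 - (X0 + X0 ^ 2 * j (c 0)) := by rw [hδ']; ring
  rw [e6, map_sub, map_sub, hl, e5, zero_sub, sub_zero] at m5
  rw [← sub_eq_add_neg, sub_eq_zero] at m5
  have := D.two (D.lam (c 0) (d 0))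
  rw [← this]
  congr 1

theorem stepB (D : LamData F K W φ b) (hφ : ∀ t, algebraMap F K (φ t) = t ^ 2) {m : ℕ}
    (ih : ∀ (c : Fin m → F) (d : Fin m → K), Met (LF L c d) → ∑ i, D.lam (c i) (d i) = 0)
    (c : Fin (m + 1) → F) (d : Fin (m + 1) → K) (hM : Met (LF L c d))
    (x : Fin (m + 1) → K) (hx : x 0 = 1)
    (hδ : ∑ i, algebraMap F K (c i) * x i * x i = 0) :
    ∑ i, D.lam (c i) (d i) = 0 := by
  let ι := algebraMap K L
  let j := algebraMap F K
  let r : Fin m → K := fun i => x i.succ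
  let cc : Fin m → F := fun i => c i.succ
  let dd : Fin m → K := fun i => d i.succ
  rw [Fin.sum_univ_succ] at hδ
  simp only [hx, mul_one] at hδ
  have h0 : j (c 0) + ∑ i, r i ^ 2 * j (cc i) = 0 := by
    rw [← hδ]
    congr 1
    exact Finset.sum_congr rfl fun i _ => by simp only [r, cc, j]; ring
  have h0' : c 0 = ∑ i, cc i * φ (r i) := by
    apply (algebraMap F K).injective
    rw [map_sum]
    simp only [map_mul, hφ]
    rw [← CharTwo.add_eq_zero, ← h0]
    simp only [mul_comm, j]
  have m1 := met_cons _ _ hM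
  have m2 := move3 _ _ _ _ (fun i => ι (r i)) m1
  have m4 : Met ((plane 0 (ι (d 0))).prod
      (LF L cc (fun i => dd i + r i ^ 2 * d 0))) := by
    convert m2 using 3
    · rw [← map_zero ι, ← h0]
      simp only [map_add, map_sum, map_mul, map_pow]
      rfl
    · simp only [LF, map_add, map_mul, map_pow]
      rfl
  have m5 := ih _ _ (Met.cancel (plane_nondeg _ _)
    (plane_met_of_isotropic _ _ 1 0 (by simp) (by simp)) m4)
  have e1 : ∀ i, D.lam (cc i) (dd i + r i ^ 2 * d 0) =
      D.lam (cc i) (dd i) + D.lam (cc i * φ (r i)) (d 0) := by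
    intro i
    rw [map_add, D.h1]
  simp only [e1] at m5
  rw [Finset.sum_add_distrib, ← AddMonoidHom.finsetSum_apply, ← map_sum, ← h0'] at m5
  rw [Fin.sum_univ_succ, add_comm]
  exact m5

end thmM
end WK


namespace WK
open Module

section thmM
variable {F K L : Type*} [Field F] [Field K] [Field L] [Algebra F K] [Algebra K L]
  [CharP L 2]

theorem caseII {b : F} (β : L)
    (hβ : β ^ 2 + β + algebraMap K L (algebraMap F K b) = 0)
    (hL : ∀ z : L, ∃ s t : K, z = algebraMap K L s + β * algebraMap K L t)
    {m : ℕ} (c : Fin (m + 1) → F) (d : Fin (m + 1) → K) (hM : Met (LF L c d))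
    (han : ∀ v, pform (fun i => algebraMap F K (c i)) d v = 0 → v = 0) :
    ∃ w : (Fin (m + 1) → K) × (Fin (m + 1) → K), w.2 0 = algebraMap F K (c 0) ∧
      pform (fun i => algebraMap F K (c i)) d w = algebraMap F K b * algebraMap F K (c 0) := by
  have h2 : (2 : L) = 0 := CharTwo.two_eq_zero
  obtain ⟨S, hS, hS'⟩ := hM
  have hQ : ∀ (w : (Fin (m + 1) → K) × (Fin (m + 1) → K)),
      LF L c d (fun i => algebraMap K L (w.1 i), fun i => algebraMap K L (w.2 i)) =
        algebraMap K L (pform (fun i => algebraMap F K (c i)) d w) := by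
    intro w
    simp only [LF, pform_apply, map_sum, map_add, map_mul]
  have hfr : finrank L ((Fin (m + 1) → L) × (Fin (m + 1) → L)) = 2 * (m + 1) := by
    rw [finrank_prod, finrank_fin_fun]; ring
  have hanL : ∀ z ∈ S, ∀ w : (Fin (m + 1) → K) × (Fin (m + 1) → K),
      (∀ i, z.1 i = algebraMap K L (w.1 i)) → (∀ i, z.2 i = algebraMap K L (w.2 i)) → z = 0 := by
    intro z hz w hw1 hw2
    have hz' : z = (fun i => algebraMap K L (w.1 i), fun i => algebraMap K L (w.2 i)) :=
      Prod.ext (funext hw1) (funext hw2)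
    have h3 := hS z hz
    rw [hz', hQ] at h3
    have h4 := han w (by simpa using h3)
    rw [hz', h4]
    ext <;> simp
  have hind : ∀ s t : K, algebraMap K L s + β * algebraMap K L t = 0 → s = 0 ∧ t = 0 := by
    intro s t hst
    by_cases ht : t = 0
    · subst ht
      simpa using hst
    · exfalso
      have hb : β = algebraMap K L (-(s / t)) := by
        have : algebraMap K L t ≠ 0 := by simpa using ht
        rw [map_neg, map_div₀]
        field_simp
        linear_combination hst
      have hall : ∀ z : L, ∃ s : K, z = algebraMap K L s := by
        intro z
        obtain ⟨s', t', h⟩ := hL z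
        exact ⟨s' + -(s / t) * t', by rw [h, map_add, map_mul, hb]⟩
      choose p hp using hall
      have hS0 : S = ⊥ := by
        rw [Submodule.eq_bot_iff]
        intro z hz
        exact hanL z hz (fun i => p (z.1 i), fun i => p (z.2 i)) (fun i => hp _) (fun i => hp _)
      rw [hS0, finrank_bot, hfr] at hS'
      omega
  let E : (K × K) ≃ₗ[K] L := LinearEquiv.ofBijective
    { toFun := fun v => algebraMap K L v.1 + β * algebraMap K L v.2
      map_add' := by intro v w; simp; ring
      map_smul' := by intro k v; simp [Algebra.smul_def]; ring }
    (by
      constructor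
      · rw [injective_iff_map_eq_zero]
        rintro ⟨s, t⟩ h
        obtain ⟨rfl, rfl⟩ := hind s t h
        rfl
      · intro z
        obtain ⟨s, t, h⟩ := hL z
        exact ⟨(s, t), h.symm⟩)
  have hE : ∀ z, z = algebraMap K L (E.symm z).1 + β * algebraMap K L (E.symm z).2 := fun z =>
    (E.apply_symm_apply z).symm
  have hKL : finrank K L = 2 := by
    rw [← E.finrank_eq, finrank_prod, finrank_self]
  have : FiniteDimensional K L := E.finiteDimensional
  let p : L →ₗ[K] K := LinearMap.snd K K K ∘ₗ E.symm.toLinearMap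
  let P : S →ₗ[K] (Fin (m + 1) → K) × (Fin (m + 1) → K) :=
    { toFun := fun z => (fun i => p (z.1.1 i), fun i => p (z.1.2 i))
      map_add' := by intro v w; ext <;> simp
      map_smul' := by intro v w; ext <;> simp }
  have hPinj : Function.Injective P := by
    rw [injective_iff_map_eq_zero]
    rintro ⟨z, hz⟩ h
    have h1 : ∀ i, (E.symm (z.1 i)).2 = 0 := fun i => congrFun (congrArg Prod.fst h) i
    have h3 : ∀ i, (E.symm (z.2 i)).2 = 0 := fun i => congrFun (congrArg Prod.snd h) i
    have := hanL z hz (fun i => (E.symm (z.1 i)).1, fun i => (E.symm (z.2 i)).1)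
      (fun i => by have := hE (z.1 i); rw [h1 i] at this; simpa using this)
      (fun i => by have := hE (z.2 i); rw [h3 i] at this; simpa using this)
    subst this
    rfl
  have : FiniteDimensional K S := FiniteDimensional.trans K L S
  have hfrK : finrank K ((Fin (m + 1) → K) × (Fin (m + 1) → K)) = 2 * (m + 1) := by
    rw [finrank_prod, finrank_fin_fun]; ring
  have hfS : finrank K S = finrank K ((Fin (m + 1) → K) × (Fin (m + 1) → K)) := by
    have e1 := LinearMap.finrank_le_finrank_of_injective hPinj
    have e2 := finrank_mul_finrank K L S
    rw [hKL] at e2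
    omega
  have hPsurj := (LinearMap.injective_iff_surjective_of_finrank_eq_finrank hfS).1 hPinj
  obtain ⟨⟨z, hz⟩, hPz⟩ := hPsurj (Pi.single 0 1, 0)
  have h1 : ∀ i, (E.symm (z.1 i)).2 = Pi.single (M := fun _ => K) 0 1 i :=
    fun i => congrFun (congrArg Prod.fst hPz) i
  have h3 : ∀ i, (E.symm (z.2 i)).2 = 0 := fun i => congrFun (congrArg Prod.snd hPz) i
  let w : (Fin (m + 1) → K) × (Fin (m + 1) → K) :=
    (fun i => (E.symm (z.1 i)).1, fun i => (E.symm (z.2 i)).1)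
  have hz2 : ∀ i, z.2 i = algebraMap K L (w.2 i) := fun i => by
    have := hE (z.2 i); rw [h3 i] at this; simpa using this
  have hz10 : z.1 0 = algebraMap K L (w.1 0) + β := by
    have := hE (z.1 0); rw [h1 0] at this; simpa using this
  have hz1 : ∀ i : Fin m, z.1 i.succ = algebraMap K L (w.1 i.succ) := fun i => by
    have := hE (z.1 i.succ); rw [h1 i.succ] at this; simpa using this
  have h4 := hS z hz
  have h5 := hQ w
  rw [LF, pform_apply, Fin.sum_univ_succ] at h4 h5
  simp only [hz2, hz10, hz1] at h4
  simp only at h5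
  have h6 : algebraMap K L (pform (fun i => algebraMap F K (c i)) d w
      - algebraMap F K b * algebraMap F K (c 0)) +
      β * algebraMap K L (w.2 0 - algebraMap F K (c 0)) = 0 := by
    rw [map_sub, map_sub, map_mul, ← h5]
    linear_combination h4 - algebraMap K L (algebraMap F K (c 0)) * hβ
      - (algebraMap K L (algebraMap F K (c 0)) * β * algebraMap K L (w.1 0)) * h2
  obtain ⟨h7, h8⟩ := hind _ _ h6
  exact ⟨w, sub_eq_zero.1 h8, sub_eq_zero.1 h7⟩

variable {W : Type*} [AddCommGroup W] {φ : K →+* F} {b : F} 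

theorem thmM [CharP K 2] (D : LamData F K W φ b) (hφ : ∀ t, algebraMap F K (φ t) = t ^ 2) (β : L)
    (hβ : β ^ 2 + β + algebraMap K L (algebraMap F K b) = 0)
    (hL : ∀ z : L, ∃ s t : K, z = algebraMap K L s + β * algebraMap K L t)
    (m : ℕ) : ∀ (c : Fin m → F) (d : Fin m → K), Met (LF L c d) →
      ∑ i, D.lam (c i) (d i) = 0 := by
  induction m with
  | zero => intros; simp
  | succ m ih =>
    intro c d hM
    by_cases han : ∀ v, pform (fun i => algebraMap F K (c i)) d v = 0 → v = 0
    · obtain ⟨w, hw1, hw2⟩ := caseII β hβ hL c d hM han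
      have hc : algebraMap F K (c 0) ≠ 0 := by
        intro h
        have h1 := han (Pi.single 0 1, 0) (by
          rw [pform_apply, Fin.sum_univ_succ]
          simp [h])
        have := congrFun (congrArg Prod.fst h1) 0
        simp at this
      have hc' : c 0 ≠ 0 := by rintro h; simp [h] at hc
      have hcL : algebraMap K L (algebraMap F K (c 0)) ≠ 0 := by simpa using hc
      let k := (algebraMap F K (c 0))⁻¹
      refine stepA D hφ ih c d hM (k • w).1 (k • w).2 ?_
        (algebraMap F K b / algebraMap F K (c 0)) ?_ (D.h4 _ hc') ?_
      · simp [hw1, k, hc]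
      · rw [Prod.mk.eta, QuadraticMap.map_smul, hw2]
        simp only [k, smul_eq_mul]
        field_simp
      · apply plane_met_of_isotropic _ _ β (algebraMap K L (algebraMap F K (c 0)))
        · intro h; exact hcL (congrArg Prod.snd h)
        · rw [map_div₀]
          field_simp
          linear_combination (algebraMap K L (algebraMap F K (c 0))) * hβ
    · push Not at han
      obtain ⟨⟨x, y⟩, hv, hv0⟩ := han
      rw [pform_apply] at hv
      simp only at hv
      by_cases hy : ∃ j, y j ≠ 0
      · obtain ⟨j, hj⟩ := hy
        obtain ⟨σ, hσ⟩ : ∃ σ : Equiv.Perm (Fin (m + 1)), σ 0 = j :=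
          ⟨Equiv.swap 0 j, Equiv.swap_apply_left _ _⟩
        have hM' : Met (LF L (fun i => c (σ i)) (fun i => d (σ i))) :=
          met_reindex σ (fun i => algebraMap K L (algebraMap F K (c i)))
            (fun i => algebraMap K L (d i)) hM
        have := stepA D hφ ih _ _ hM' (fun i => (y j)⁻¹ * x (σ i)) (fun i => (y j)⁻¹ * y (σ i))
          (by rw [hσ]; exact inv_mul_cancel₀ hj) 0 ?_ (by simp)
          (by
            rw [map_zero (algebraMap K L)]
            exact plane_met_of_isotropic _ _ 0 1 (by simp) (by simp))
        · rw [← Equiv.sum_comp σ]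
          exact this
        · rw [pform_apply]
          simp only
          have e := Equiv.sum_comp σ (fun i => (y j)⁻¹ ^ 2 * (algebraMap F K (c i) * x i * x i
            + x i * y i + d i * y i * y i))
          rw [← Finset.mul_sum Finset.univ _ _, ← Finset.mul_sum Finset.univ _ _, hv, mul_zero] at e
          rw [Finset.mul_sum] at e
          rw [← e]
          exact Finset.sum_congr rfl fun i _ => by ring
      · push Not at hy
        have hx : ∃ j, x j ≠ 0 := by
          by_contra hx
          push Not at hx
          exact hv0 (Prod.ext (funext hx) (funext hy))
        obtain ⟨j, hj⟩ := hx
        obtain ⟨σ, hσ⟩ : ∃ σ : Equiv.Perm (Fin (m + 1)), σ 0 = j :=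
          ⟨Equiv.swap 0 j, Equiv.swap_apply_left _ _⟩
        have hM' : Met (LF L (fun i => c (σ i)) (fun i => d (σ i))) :=
          met_reindex σ (fun i => algebraMap K L (algebraMap F K (c i)))
            (fun i => algebraMap K L (d i)) hM
        have := stepB D hφ ih _ _ hM' (fun i => (x j)⁻¹ * x (σ i))
          (by rw [hσ]; exact inv_mul_cancel₀ hj) ?_
        · rw [← Equiv.sum_comp σ]
          exact this
        · simp only [hy, mul_zero, add_zero] at hv
          have e := Equiv.sum_comp σ (fun i => (x j)⁻¹ ^ 2 * (algebraMap F K (c i) * x i * x i))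
          rw [← Finset.mul_sum Finset.univ _ _, ← Finset.mul_sum Finset.univ _ _, hv, mul_zero] at e
          rw [Finset.mul_sum] at e
          rw [← e]
          exact Finset.sum_congr rfl fun i _ => by ring

end thmM
end WK


namespace WK
open Module QF

section link
variable {F : Type*} [Field F]

/-- The quadratic form attached to coefficients. -/
def Qf (q : QF F) : QuadraticForm F (Fin q.dim → F) :=
  LinearMap.BilinMap.toQuadraticMap (LinearMap.mk₂ F
    (fun v w : Fin q.dim → F => ∑ i, ∑ j, q.c i j * v i * w j)
    (by intros; simp only [Pi.add_apply, mul_add, add_mul, Finset.sum_add_distrib])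
    (by
      intros
      simp only [Pi.smul_apply, smul_eq_mul, Finset.mul_sum]
      exact Finset.sum_congr rfl fun i _ => Finset.sum_congr rfl fun j _ => by ring)
    (by intros; simp only [Pi.add_apply, mul_add, Finset.sum_add_distrib])
    (by
      intros
      simp only [Pi.smul_apply, smul_eq_mul, Finset.mul_sum]
      exact Finset.sum_congr rfl fun i _ => Finset.sum_congr rfl fun j _ => by ring))

theorem Qf_apply (q : QF F) (x : Fin q.dim → F) : Qf q x = q.eval x := rfl

theorem Qf_polar (q : QF F) (x y : Fin q.dim → F) :
    QuadraticMap.polar (Qf q) x y = (q.c + q.c.transpose).mulVec x ⬝ᵥ y := by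
  have h : QuadraticMap.polar (Qf q) x y =
      ∑ i, ∑ j, q.c i j * x i * y j + ∑ i, ∑ j, q.c i j * y i * x j := by
    simp only [QuadraticMap.polar, Qf_apply, QF.eval, ← Finset.sum_sub_distrib,
      ← Finset.sum_add_distrib]
    refine Finset.sum_congr rfl fun i _ => Finset.sum_congr rfl fun j _ => ?_
    simp only [Pi.add_apply]
    ring
  rw [h, Finset.sum_comm]
  simp only [dotProduct, Matrix.mulVec, Matrix.add_apply, Matrix.transpose_apply,
    ← Finset.sum_add_distrib, Finset.sum_mul]
  refine Finset.sum_congr rfl fun i _ => Finset.sum_congr rfl fun j _ => ?_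
  ring

theorem nonsing_iff (q : QF F) : q.Nonsingular ↔ Nondeg (Qf q) := by
  constructor
  · intro h x hx
    apply h
    apply dotProduct_eq_zero
    intro w
    rw [← Qf_polar, hx]
  · intro h x hx
    apply h
    intro y
    rw [Qf_polar, hx, zero_dotProduct]

theorem orth_eval {n k : ℕ} (A : Matrix (Fin n) (Fin n) F) (B : Matrix (Fin k) (Fin k) F)
    (v : Fin (n + k) → F) :
    (∑ i, ∑ j, (Matrix.reindex finSumFinEquiv finSumFinEquiv (Matrix.fromBlocks A 0 0 B)) i j
      * v i * v j) =
    ∑ i, ∑ j, A i j * v (Fin.castAdd k i) * v (Fin.castAdd k j) +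
    ∑ i, ∑ j, B i j * v (Fin.natAdd n i) * v (Fin.natAdd n j) := by
  rw [Fin.sum_univ_add]
  simp [Fin.sum_univ_add]

/-- Orthogonal sums are products. -/
noncomputable def orthIso (q q' : QF F) :
    (Qf (q.orthSum q')).IsometryEquiv ((Qf q).prod (Qf q')) where
  toFun v := (fun i => v (Fin.castAdd _ i), fun i => v (Fin.natAdd _ i))
  invFun w := Fin.append w.1 w.2
  map_add' _ _ := rfl
  map_smul' _ _ := rfl
  left_inv v := by
    funext i
    refine Fin.addCases (fun i => ?_) (fun i => ?_) i <;> simp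
  right_inv w := by
    ext i <;> simp
  map_app' v := by
    exact (orth_eval q.c q'.c v).symm

theorem isometric_iff (q q' : QF F) :
    q.Isometric q' ↔ Nonempty ((Qf q).IsometryEquiv (Qf q')) := by
  constructor
  · rintro ⟨e, he⟩
    exact ⟨{ e with map_app' := he }⟩
  · rintro ⟨e⟩
    exact ⟨e.toLinearEquiv, fun x => e.map_app x⟩

theorem eval_smul (a : F) (q : QF F) (x : Fin q.dim → F) :
    (smul a q).eval x = a * q.eval x := by
  simp only [QF.eval, Finset.mul_sum]
  refine Finset.sum_congr rfl fun i _ => Finset.sum_congr rfl fun j _ => ?_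
  change a * q.c i j * x i * x j = _
  ring

theorem nonsing_smul {a : F} (ha : a ≠ 0) {q : QF F} (h : q.Nonsingular) :
    (smul a q).Nonsingular := by
  intro (x : Fin q.dim → F) hx
  apply h x
  have e : (a • (q.c + q.c.transpose)).mulVec x = 0 := by
    rw [smul_add]
    exact hx
  rw [Matrix.smul_mulVec] at e
  exact (smul_eq_zero.1 e).resolve_left ha

theorem bin_eval (c d : F) (v : Fin 2 → F) :
    (∑ i, ∑ j, !![c, 1; 0, d] i j * v i * v j) = plane c d (v 0, v 1) := by
  simp [Fin.sum_univ_two]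

/-- Binary forms are planes. -/
noncomputable def binIso (c d : F) : (Qf (bin c d)).IsometryEquiv (plane c d) :=
  { LinearEquiv.finTwoArrow F F with
    map_app' := by
      intro v
      exact (bin_eval c d v).symm }

theorem nonsing_bin [CharP F 2] (c d : F) : (bin c d).Nonsingular :=
  (nonsing_iff _).2 ((plane_nondeg c d).iso (binIso c d).symm)

theorem nonsing_nil : (nil : QF F).Nonsingular := by
  intro x _
  exact Subsingleton.elim (α := Fin 0 → F) _ _

theorem nonsing_orth {q q' : QF F} (h : q.Nonsingular) (h' : q'.Nonsingular) :
    (q.orthSum q').Nonsingular :=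
  (nonsing_iff _).2 ((((nonsing_iff _).1 h).prod ((nonsing_iff _).1 h')).iso (orthIso q q').symm)

theorem met_nil : Met (Qf (nil : QF F)) := by
  refine ⟨⊥, by simp, ?_⟩
  have : finrank F (Fin (nil : QF F).dim → F) = 0 := by
    rw [finrank_fin_fun]; rfl
  omega

theorem hypIso [CharP F 2] (k : ℕ) :
    Nonempty ((Qf (hyp k : QF F)).IsometryEquiv (pform (0 : Fin k → F) 0)) := by
  induction k with
  | zero =>
    refine ⟨{ (0 : (Fin 0 → F) ≃ₗ[F] ((Fin 0 → F) × (Fin 0 → F))) with map_app' := ?_ }⟩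
    intro x
    have h : x = 0 := Subsingleton.elim (α := Fin 0 → F) _ _
    rw [h]
    simp
    rfl
  | succ k ih =>
    obtain ⟨e⟩ := ih
    have e1 : (Qf (hyp (k + 1) : QF F)).IsometryEquiv ((Qf (bin 0 0)).prod (Qf (hyp k : QF F))) :=
      orthIso _ _
    have e2 := (e1.trans ((binIso 0 0).prod e)).trans (consIso 0 0 0 0)
    have h0 : (Fin.cons 0 0 : Fin (k + 1) → F) = 0 := by
      funext i
      refine Fin.cases ?_ (fun i => ?_) i <;> simp
    rw [h0] at e2
    exact ⟨e2⟩

theorem met_pform_zero (k : ℕ) : Met (pform (0 : Fin k → F) 0) := by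
  refine Met.of_map _ (LinearMap.inl F (Fin k → F) (Fin k → F)) LinearMap.inl_injective ?_ ?_
  · intro x
    simp [pform_apply]
  · rw [finrank_prod, finrank_fin_fun]; omega

theorem pform_nondeg [CharP F 2] {k : ℕ} (c d : Fin k → F) : Nondeg (pform c d) := by
  intro v hv
  ext i
  · have := hv (0, Pi.single i 1)
    rw [pform_polar] at this
    simpa [Pi.single_apply] using this
  · have := hv (Pi.single i 1, 0)
    rw [pform_polar] at this
    simpa [Pi.single_apply] using this

theorem nonsing_hyp [CharP F 2] (k : ℕ) : (hyp k : QF F).Nonsingular := by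
  obtain ⟨e⟩ := hypIso (F := F) k
  exact (nonsing_iff _).2 ((pform_nondeg 0 0).iso e.symm)

theorem met_hyp [CharP F 2] (k : ℕ) : Met (Qf (hyp k : QF F)) := by
  obtain ⟨e⟩ := hypIso (F := F) k
  exact (met_pform_zero k).iso e.symm

theorem hyperbolic_iff [CharP F 2] {q : QF F} (h : q.Nonsingular) :
    q.Hyperbolic ↔ Met (Qf q) := by
  constructor
  · rintro ⟨k, hk⟩
    rw [isometric_iff] at hk
    obtain ⟨e⟩ := hk
    exact (met_hyp k).iso e.symm
  · intro hM
    obtain ⟨m, c, d, ⟨e⟩, hcd⟩ := decomp_aux _ (Qf q) ((nonsing_iff _).1 h) rfl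
    obtain ⟨rfl, rfl⟩ := hcd hM
    obtain ⟨e'⟩ := hypIso (F := F) m
    exact ⟨m, (isometric_iff _ _).2 ⟨e.trans e'.symm⟩⟩

variable {L : Type*} [Field L]

theorem nonsing_map (f : F →+* L) {q : QF F} (h : q.Nonsingular) : (q.map f).Nonsingular := by
  have h1 : (q.c + q.c.transpose).det ≠ 0 := by
    intro h0
    obtain ⟨v, hv, hv'⟩ := Matrix.exists_mulVec_eq_zero_iff.2 h0
    exact hv (h v hv')
  have h2 : ((q.map f).c + (q.map f).c.transpose).det ≠ 0 := by
    have : (q.map f).c + (q.map f).c.transpose = f.mapMatrix (q.c + q.c.transpose) := by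
      ext i j
      exact (map_add f (q.c i j) (q.c j i)).symm
    have h3 := RingHom.map_det f (q.c + q.c.transpose)
    intro h4
    apply h1
    apply f.injective
    rw [h3, map_zero, ← h4]
    exact congrArg Matrix.det this.symm
  intro x hx
  by_contra hx0
  exact h2 (Matrix.exists_mulVec_eq_zero_iff.1 ⟨x, hx0, hx⟩)

/-- Coordinatewise application of `f`. -/
def vmap (f : F →+* L) (n : ℕ) : (Fin n → F) →ₛₗ[f] (Fin n → L) where
  toFun v i := f (v i)
  map_add' v w := by funext i; exact map_add f _ _
  map_smul' v w := by funext i; exact map_mul f _ _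

theorem vmap_span (f : F →+* L) (n : ℕ) : Submodule.span L (Set.range (vmap f n)) = ⊤ := by
  rw [eq_top_iff, ← (Pi.basisFun L (Fin n)).span_eq, Submodule.span_le]
  rintro _ ⟨i, rfl⟩
  apply Submodule.subset_span
  refine ⟨Pi.single i 1, ?_⟩
  funext j
  simp [vmap, Pi.single_apply, apply_ite f]

theorem met_map (f : F →+* L) {q : QF F} (h : Met (Qf q)) : Met (Qf (q.map f)) := by
  refine Met.baseChange (f := f) (V' := Fin (q.map f).dim → L) (Q' := Qf (q.map f))
    (vmap f q.dim) (vmap_span f q.dim) ?_ ?_ h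
  · rw [finrank_fin_fun, finrank_fin_fun]; rfl
  · intro x
    simp only [Qf_apply, QF.eval, map_sum, map_mul]
    rfl

theorem map_blocks (f : F →+* L) {n k : ℕ} (A : Matrix (Fin n) (Fin n) F)
    (B : Matrix (Fin k) (Fin k) F) :
    (fun i j => f (Matrix.reindex finSumFinEquiv finSumFinEquiv (Matrix.fromBlocks A 0 0 B) i j)) =
    Matrix.reindex finSumFinEquiv finSumFinEquiv (Matrix.fromBlocks (A.map f) 0 0 (B.map f)) := by
  funext i j
  refine Fin.addCases (fun i => ?_) (fun i => ?_) i <;>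
  refine Fin.addCases (fun j => ?_) (fun j => ?_) j <;> simp

theorem map_orth (f : F →+* L) (q q' : QF F) :
    (q.orthSum q').map f = (q.map f).orthSum (q'.map f) :=
  congrArg (QF.mk (q.dim + q'.dim)) (map_blocks f q.c q'.c)

theorem map_bin (f : F →+* L) (c d : F) : (bin c d).map f = bin (f c) (f d) := by
  simp only [QF.map, QF.bin]
  congr 1
  funext i j
  fin_cases i <;> fin_cases j <;> simp

theorem map_smulQ (f : F →+* L) (a : F) (q : QF F) :
    (smul a q).map f = smul (f a) (q.map f) := by
  refine congrArg (QF.mk q.dim) ?_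
  funext i j
  exact map_mul f a (q.c i j)

end link
end WK


namespace WK
open Module QF

section witt
variable {F : Type*} [Field F]

/-- Associativity isometry. -/
def assocIso {V₁ V₂ V₃ : Type*} [AddCommGroup V₁] [Module F V₁] [AddCommGroup V₂] [Module F V₂]
    [AddCommGroup V₃] [Module F V₃] (Q₁ : QuadraticForm F V₁) (Q₂ : QuadraticForm F V₂)
    (Q₃ : QuadraticForm F V₃) :
    ((Q₁.prod Q₂).prod Q₃).IsometryEquiv (Q₁.prod (Q₂.prod Q₃)) where
  toLinearEquiv := LinearEquiv.prodAssoc F V₁ V₂ V₃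
  map_app' _ := (add_assoc _ _ _).symm

/-- Commutativity isometry. -/
def commIso {V₁ V₂ : Type*} [AddCommGroup V₁] [Module F V₁] [AddCommGroup V₂] [Module F V₂]
    (Q₁ : QuadraticForm F V₁) (Q₂ : QuadraticForm F V₂) :
    (Q₁.prod Q₂).IsometryEquiv (Q₂.prod Q₁) where
  toLinearEquiv := LinearEquiv.prodComm F V₁ V₂
  map_app' _ := add_comm _ _

/-- Middle swap isometry. -/
def swapIso {V₁ V₂ V₃ V₄ : Type*} [AddCommGroup V₁] [Module F V₁] [AddCommGroup V₂] [Module F V₂]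
    [AddCommGroup V₃] [Module F V₃] [AddCommGroup V₄] [Module F V₄] (Q₁ : QuadraticForm F V₁)
    (Q₂ : QuadraticForm F V₂) (Q₃ : QuadraticForm F V₃) (Q₄ : QuadraticForm F V₄) :
    ((Q₁.prod Q₂).prod (Q₃.prod Q₄)).IsometryEquiv ((Q₁.prod Q₃).prod (Q₂.prod Q₄)) where
  toLinearEquiv := LinearEquiv.prodProdProdComm F V₁ V₂ V₃ V₄
  map_app' _ := add_add_add_comm _ _ _ _

/-- Product of isometries. -/
def prodIso {V₁ V₂ V₃ V₄ : Type*} [AddCommGroup V₁] [Module F V₁] [AddCommGroup V₂] [Module F V₂]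
    [AddCommGroup V₃] [Module F V₃] [AddCommGroup V₄] [Module F V₄] {Q₁ : QuadraticForm F V₁}
    {Q₂ : QuadraticForm F V₂} {Q₃ : QuadraticForm F V₃} {Q₄ : QuadraticForm F V₄}
    (e : Q₁.IsometryEquiv Q₃) (e' : Q₂.IsometryEquiv Q₄) :
    (Q₁.prod Q₂).IsometryEquiv (Q₃.prod Q₄) where
  toLinearEquiv := LinearEquiv.prodCongr e.toLinearEquiv e'.toLinearEquiv
  map_app' x := congr_arg₂ (· + ·) (e.map_app x.1) (e'.map_app x.2)

theorem Met.trans' [CharP F 2] {V₁ V₂ V₃ : Type*} [AddCommGroup V₁] [Module F V₁]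
    [AddCommGroup V₂] [Module F V₂]
    [AddCommGroup V₃] [Module F V₃] [FiniteDimensional F V₁] [FiniteDimensional F V₂]
    [FiniteDimensional F V₃] {Q₁ : QuadraticForm F V₁} {Q₂ : QuadraticForm F V₂}
    {Q₃ : QuadraticForm F V₃} (hN : Nondeg Q₂) (h : Met (Q₁.prod Q₂)) (h' : Met (Q₂.prod Q₃)) :
    Met (Q₁.prod Q₃) := by
  have h0 : Met (Q₂.prod Q₁) := Met.iso h (commIso Q₁ Q₂)
  have h1 : Met ((Q₂.prod Q₁).prod (Q₂.prod Q₃)) := h0.prod h'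
  have h2 : Met ((Q₂.prod Q₂).prod (Q₁.prod Q₃)) := Met.iso h1 (swapIso Q₂ Q₁ Q₂ Q₃)
  exact Met.cancel (hN.prod hN) (Met.graph LinearMap.id rfl fun _ => rfl) h2

variable (F) in
/-- Nonsingular forms modulo Witt equivalence. -/
def wsetoid [CharP F 2] : Setoid {q : QF F // q.Nonsingular} where
  r q q' := Met ((Qf q.1).prod (Qf q'.1))
  iseqv :=
    { refl := fun _ => Met.graph LinearMap.id rfl fun _ => rfl
      symm := fun h => h.iso (commIso _ _)
      trans := fun {_ y _} h h' => Met.trans' ((nonsing_iff _).1 y.2) h h' }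

variable (F) in
/-- The quadratic Witt group. -/
def WG [CharP F 2] : Type _ := Quotient (wsetoid F)

variable [CharP F 2]

/-- Witt class. -/
def cls (q : QF F) (h : q.Nonsingular) : WG F := Quotient.mk (wsetoid F) ⟨q, h⟩

theorem cls_eq_iff {q q' : QF F} (h : q.Nonsingular) (h' : q'.Nonsingular) :
    cls q h = cls q' h' ↔ Met ((Qf q).prod (Qf q')) :=
  ⟨fun e => Quotient.exact (s := wsetoid F) e, fun e => Quotient.sound (s := wsetoid F) e⟩

theorem cls_eq_of {V V' : Type*} [AddCommGroup V] [Module F V] [AddCommGroup V'] [Module F V']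
    {Q : QuadraticForm F V} {Q' : QuadraticForm F V'}
    {q q' : QF F} (h : q.Nonsingular) (h' : q'.Nonsingular)
    (e : (Qf q).IsometryEquiv Q) (e' : (Qf q').IsometryEquiv Q') (hM : Met (Q.prod Q')) :
    cls q h = cls q' h' :=
  (cls_eq_iff h h').2 (hM.iso (e.symm.prod e'.symm))

theorem met_iso_graph {V V' : Type*} [AddCommGroup V] [Module F V] [AddCommGroup V'] [Module F V']
    [FiniteDimensional F V] [FiniteDimensional F V']
    {Q : QuadraticForm F V} {Q' : QuadraticForm F V'} (e : Q.IsometryEquiv Q') :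
    Met (Q.prod Q') :=
  Met.graph (e.toLinearEquiv : V →ₗ[F] V') e.toLinearEquiv.finrank_eq.symm fun x => e.map_app x

theorem cls_iso {q q' : QF F} (h : q.Nonsingular) (h' : q'.Nonsingular)
    (e : (Qf q).IsometryEquiv (Qf q')) : cls q h = cls q' h' :=
  (cls_eq_iff h h').2 (met_iso_graph e)

theorem WG.ind {p : WG F → Prop} (h : ∀ q hq, p (cls q hq)) (w : WG F) : p w :=
  Quotient.ind (s := wsetoid F) (fun q => h q.1 q.2) w

instance : Zero (WG F) := ⟨cls nil nonsing_nil⟩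

instance : Add (WG F) := ⟨Quotient.map₂ (sa := wsetoid F) (sb := wsetoid F) (sc := wsetoid F)
  (fun q q' => ⟨q.1.orthSum q'.1, nonsing_orth q.2 q'.2⟩) (by
    intro q r h q' r' h'
    have h1 : Met (((Qf q.1).prod (Qf r.1)).prod ((Qf q'.1).prod (Qf r'.1))) := Met.prod h h'
    have h2 : Met (((Qf q.1).prod (Qf q'.1)).prod ((Qf r.1).prod (Qf r'.1))) :=
      Met.iso h1 (swapIso (Qf q.1) (Qf r.1) (Qf q'.1) (Qf r'.1))
    exact h2.iso ((orthIso _ _).symm.prod (orthIso _ _).symm))⟩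

theorem cls_add {q q' : QF F} (h : q.Nonsingular) (h' : q'.Nonsingular) :
    cls q h + cls q' h' = cls (q.orthSum q') (nonsing_orth h h') := rfl

theorem cls_zero : (0 : WG F) = cls nil nonsing_nil := rfl

theorem cls_eq_zero_iff {q : QF F} (h : q.Nonsingular) : cls q h = 0 ↔ Met (Qf q) := by
  rw [cls_zero, cls_eq_iff]
  constructor
  · intro h1
    exact Met.cancel ((nonsing_iff _).1 nonsing_nil) met_nil
      (h1.iso (commIso _ _))
  · intro h1
    exact h1.prod met_nil

theorem wadd_self (w : WG F) : w + w = 0 := by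
  induction w using WG.ind with
  | h q hq =>
    rw [cls_add, cls_eq_zero_iff]
    exact (met_iso_graph (QuadraticMap.IsometryEquiv.refl _)).iso (orthIso _ _).symm

theorem wadd_assoc (u v w : WG F) : u + v + w = u + (v + w) := by
  induction u using WG.ind with | h p hp => ?_
  induction v using WG.ind with | h q hq => ?_
  induction w using WG.ind with | h r hr => ?_
  simp only [cls_add]
  have e1 := (orthIso (p.orthSum q) r).trans
    (prodIso (orthIso p q) (QuadraticMap.IsometryEquiv.refl (Qf r)))
  have e2 := (orthIso p (q.orthSum r)).trans
    (prodIso (QuadraticMap.IsometryEquiv.refl (Qf p)) (orthIso q r))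
  exact cls_iso _ _ ((e1.trans (assocIso _ _ _)).trans e2.symm)

theorem wadd_comm (u v : WG F) : u + v = v + u := by
  induction u using WG.ind with | h p hp => ?_
  induction v using WG.ind with | h q hq => ?_
  simp only [cls_add]
  exact cls_iso _ _ (((orthIso _ _).trans (commIso _ _)).trans
    (orthIso _ _).symm)

theorem wzero_add (u : WG F) : 0 + u = u := by
  induction u using WG.ind with | h p hp => ?_
  rw [cls_zero, cls_add]
  refine cls_eq_of _ _ (orthIso _ _) (QuadraticMap.IsometryEquiv.refl _) ?_
  exact (met_nil.prod (met_iso_graph (QuadraticMap.IsometryEquiv.refl _))).iso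
    (assocIso _ _ _).symm

instance : Neg (WG F) := ⟨id⟩

noncomputable instance : AddCommGroup (WG F) where
  add_assoc := wadd_assoc
  zero_add := wzero_add
  add_zero u := by rw [wadd_comm, wzero_add]
  nsmul := nsmulRec
  zsmul := zsmulRec
  neg_add_cancel := wadd_self
  add_comm := wadd_comm

theorem wneg (w : WG F) : -w = w := rfl

theorem smul_orth (a : F) (q q' : QF F) :
    smul a (q.orthSum q') = (smul a q).orthSum (smul a q') := by
  refine congrArg (QF.mk (q.dim + q'.dim)) ?_
  change a • (Matrix.reindex finSumFinEquiv finSumFinEquiv (Matrix.fromBlocks q.c 0 0 q'.c)) =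
    Matrix.reindex finSumFinEquiv finSumFinEquiv (Matrix.fromBlocks (a • q.c) 0 0 (a • q'.c))
  funext i j
  refine Fin.addCases (fun i => ?_) (fun i => ?_) i <;>
  refine Fin.addCases (fun j => ?_) (fun j => ?_) j <;> simp

theorem met_smul (a : F) {q : QF F} (h : Met (Qf q)) : Met (Qf (smul a q)) := by
  obtain ⟨S, hS, hS'⟩ := h
  refine ⟨S, fun x hx => ?_, hS'⟩
  have h : q.eval x = 0 := hS x hx
  exact (eval_smul a q x).trans (by rw [h, mul_zero])

/-- Scaling on the Witt group. -/
noncomputable def sc (a : F) (ha : a ≠ 0) : WG F →+ WG F :=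
  AddMonoidHom.mk' (Quotient.map (sa := wsetoid F) (sb := wsetoid F)
    (fun q => ⟨smul a q.1, nonsing_smul ha q.2⟩) (by
      intro q q' h
      have h1 : Met (Qf (q.1.orthSum q'.1)) := Met.iso h (orthIso _ _).symm
      have h2 := met_smul a h1
      rw [smul_orth] at h2
      exact h2.iso (orthIso _ _))) (by
    intro u v
    induction u using WG.ind with | h p hp => ?_
    induction v using WG.ind with | h q hq => ?_
    refine Quotient.sound (s := wsetoid F) ?_
    change Met ((Qf (smul a (p.orthSum q))).prod (Qf ((smul a p).orthSum (smul a q))))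
    rw [smul_orth]
    exact met_iso_graph (QuadraticMap.IsometryEquiv.refl _))

theorem sc_cls (a : F) (ha : a ≠ 0) {q : QF F} (h : q.Nonsingular) :
    sc a ha (cls q h) = cls (smul a q) (nonsing_smul ha h) := rfl

section res
variable {L : Type*} [Field L] [CharP L 2]

/-- Restriction. -/
noncomputable def res (f : F →+* L) : WG F →+ WG L :=
  AddMonoidHom.mk' (Quotient.map (sa := wsetoid F) (sb := wsetoid L)
    (fun q => ⟨q.1.map f, nonsing_map f q.2⟩) (by
      intro q q' h
      have h1 : Met (Qf (q.1.orthSum q'.1)) := Met.iso h (orthIso _ _).symm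
      have h2 := met_map f h1
      rw [map_orth] at h2
      exact h2.iso (orthIso _ _))) (by
    intro u v
    induction u using WG.ind with | h p hp => ?_
    induction v using WG.ind with | h q hq => ?_
    refine Quotient.sound (s := wsetoid L) ?_
    change Met ((Qf ((p.orthSum q).map f)).prod (Qf ((p.map f).orthSum (q.map f))))
    rw [map_orth]
    exact met_iso_graph (QuadraticMap.IsometryEquiv.refl _))

theorem res_cls (f : F →+* L) {q : QF F} (h : q.Nonsingular) :
    res f (cls q h) = cls (q.map f) (nonsing_map f h) := rfl

end res

/-- The class of a binary form. -/
def sym (c d : F) : WG F := cls (bin c d) (nonsing_bin c d)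

theorem cls_congr {q q' : QF F} (h : q.Nonsingular) (e : q = q') :
    cls q h = cls q' (e ▸ h) := by subst e; rfl

theorem res_sym {L : Type*} [Field L] [CharP L 2] (f : F →+* L) (c d : F) :
    res f (sym c d) = sym (f c) (f d) := by
  rw [sym, res_cls, sym]
  exact cls_congr _ (map_bin f c d)

theorem res_sc {L : Type*} [Field L] [CharP L 2] (f : F →+* L) (a : F) (ha : a ≠ 0) (w : WG F) :
    res f (sc a ha w) = sc (f a) (by simpa using ha) (res f w) := by
  induction w using WG.ind with | h p hp => ?_
  rw [sc_cls, res_cls, res_cls, sc_cls]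
  exact cls_congr _ (map_smulQ f a p)

theorem sym_eq_zero_iff (c d : F) : sym c d = 0 ↔ Met (plane c d) := by
  rw [sym, cls_eq_zero_iff]
  exact ⟨fun h => h.iso (binIso c d), fun h => h.iso (binIso c d).symm⟩

theorem sym_eq_of {c d c' d' : F} (h : Met ((plane c d).prod (plane c' d'))) :
    sym c d = sym c' d' :=
  cls_eq_of _ _ (binIso c d) (binIso c' d') h

theorem sym_add_left (c c' d : F) : sym (c + c') d = sym c d + sym c' d := by
  rw [sym, sym, sym, cls_add]
  refine cls_eq_of _ _ (binIso _ _) ((orthIso _ _).trans ((binIso _ _).prod (binIso _ _))) ?_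
  refine Met.of_map (k := 3) _
    { toFun := fun v => ((v 0, v 1 + v 2), ((v 0, v 1), (v 0, v 2)))
      map_add' := ?_, map_smul' := ?_ } ?_ ?_ ?_
  · intro v w; ext <;> simp <;> ring
  · intro v w; ext <;> simp <;> ring
  · rw [injective_iff_map_eq_zero]
    intro v hv
    simp at hv
    funext i
    fin_cases i <;> simp_all
  · intro v
    have h2 : (2 : F) = 0 := CharTwo.two_eq_zero
    simp only [LinearMap.coe_mk, AddHom.coe_mk, QuadraticMap.prod_apply, plane_apply]
    linear_combination (c * v 0 * v 0 + c' * v 0 * v 0 + v 0 * v 1 + v 0 * v 2 + d * v 1 * v 1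
      + d * v 2 * v 2 + d * v 1 * v 2) * h2
  · simp

theorem sym_comm (c d : F) : sym c d = sym d c := by
  refine sym_eq_of (Met.graph (LinearEquiv.prodComm F F F : F × F →ₗ[F] F × F) rfl ?_)
  rintro ⟨x, y⟩
  simp only [plane_apply, LinearEquiv.coe_coe, LinearEquiv.prodComm_apply, Prod.swap]
  ring

theorem sym_add_right (c d d' : F) : sym c (d + d') = sym c d + sym c d' := by
  rw [sym_comm, sym_add_left, sym_comm d, sym_comm d']

/-- `sym` as a biadditive map. -/
noncomputable def symHom : F →+ F →+ WG F :=
  AddMonoidHom.mk' (fun c => AddMonoidHom.mk' (fun d => sym c d) (sym_add_right c))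
    (fun c c' => by ext d; exact sym_add_left c c' d)

theorem sym_sq (c d : F) : sym c (c * d ^ 2) = sym c d := by
  refine (sym_eq_of ?_).symm
  refine Met.graph { toFun := fun v => (v.1 + d * v.2, v.2), map_add' := ?_, map_smul' := ?_ }
    rfl ?_
  · intro v w; ext <;> simp; ring
  · intro v w; ext <;> simp; ring
  · rintro ⟨x, y⟩
    have h2 : (2 : F) = 0 := CharTwo.two_eq_zero
    simp only [LinearMap.coe_mk, AddHom.coe_mk, plane_apply]
    linear_combination (c * x * y * d + c * d ^ 2 * y ^ 2) * h2

theorem sym_move_sq (c d t : F) : sym (c * t ^ 2) d = sym c (t ^ 2 * d) := by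
  refine sym_eq_of ?_
  refine Met.of_map (k := 2) _
    { toFun := fun v => ((v 0, t * v 1), (t * v 0, v 1))
      map_add' := ?_, map_smul' := ?_ } ?_ ?_ ?_
  · intro v w; ext <;> simp <;> ring
  · intro v w; ext <;> simp <;> ring
  · rw [injective_iff_map_eq_zero]
    intro v hv
    simp at hv
    funext i
    fin_cases i <;> simp_all
  · intro v
    have h2 : (2 : F) = 0 := CharTwo.two_eq_zero
    simp only [LinearMap.coe_mk, AddHom.coe_mk, QuadraticMap.prod_apply, plane_apply]
    linear_combination (c * t ^ 2 * v 0 * v 0 + t * v 0 * v 1 + d * t ^ 2 * v 1 * v 1) * h2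
  · simp

/-- auxiliary map -/
def auxmap (a : F) : (Fin 2 → F) →ₗ[F] F × F where
  toFun v := (v 0, a * v 1)
  map_add' v w := by ext <;> simp; ring
  map_smul' v w := by ext <;> simp; ring

theorem auxmap_eval (a : F) (ha : a ≠ 0) (c d : F) (v : Fin 2 → F) :
    plane (a * c) (d / a) (auxmap a v) = a * plane c d (v 0, v 1) := by
  simp only [auxmap, LinearMap.coe_mk, AddHom.coe_mk, plane_apply]
  field_simp

theorem sc_sym (a : F) (ha : a ≠ 0) (c d : F) : sc a ha (sym c d) = sym (a * c) (d / a) := by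
  rw [sym, sc_cls, sym]
  refine cls_eq_of _ _ (QuadraticMap.IsometryEquiv.refl _) (binIso _ _) ?_
  refine Met.graph (Q := Qf (smul a (bin c d))) (auxmap a) ?_ ?_
  · rw [finrank_prod, finrank_fin_fun, finrank_self]; rfl
  · intro v
    refine (auxmap_eval a ha c d v).trans ?_
    refine Eq.trans ?_ (eval_smul a (bin c d) v).symm
    exact congrArg (a * ·) (bin_eval c d v).symm

theorem sc_sq (t : F) (ht : t ^ 2 ≠ 0) (w : WG F) : sc (t ^ 2) ht w = w := by
  induction w using WG.ind with | h p hp => ?_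
  rw [sc_cls]
  refine ((cls_eq_iff _ _).2 ?_)
  refine Met.graph (Q := Qf (smul (t ^ 2) p)) (t • (LinearMap.id : (Fin p.dim → F) →ₗ[F] (Fin p.dim → F))) rfl ?_
  intro x
  refine Eq.trans ?_ (eval_smul (t ^ 2) p x).symm
  refine Eq.trans (QuadraticMap.map_smul (Qf p) t x) ?_
  exact congrArg (· * p.eval x) (pow_two t).symm

theorem exists_rep (m : ℕ) : ∀ (c d : Fin m → F), ∃ (q : QF F) (h : q.Nonsingular),
    Nonempty ((Qf q).IsometryEquiv (pform c d)) ∧ cls q h = ∑ i, sym (c i) (d i) := by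
  induction m with
  | zero =>
    intro c d
    refine ⟨hyp 0, nonsing_hyp 0, ?_, ?_⟩
    · rw [Subsingleton.elim c 0, Subsingleton.elim d 0]
      exact hypIso 0
    · rw [cls_eq_zero_iff _ |>.2 (met_hyp 0)]
      simp
  | succ m ih =>
    intro c d
    obtain ⟨q, h, ⟨e⟩, hq⟩ := ih (fun i => c i.succ) (fun i => d i.succ)
    refine ⟨(bin (c 0) (d 0)).orthSum q, nonsing_orth (nonsing_bin _ _) h, ⟨?_⟩, ?_⟩
    · have e1 := ((orthIso _ _).trans ((binIso (c 0) (d 0)).prod e)).trans (consIso _ _ _ _)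
      have h1 : (Fin.cons (c 0) (fun i => c i.succ) : Fin (m + 1) → F) = c := Fin.cons_self_tail c
      have h2 : (Fin.cons (d 0) (fun i => d i.succ) : Fin (m + 1) → F) = d := Fin.cons_self_tail d
      rw [h1, h2] at e1
      exact e1
    · rw [← cls_add (nonsing_bin _ _) h, hq, Fin.sum_univ_succ]
      rfl

theorem sum_sym_eq_zero_iff {m : ℕ} (c d : Fin m → F) :
    ∑ i, sym (c i) (d i) = 0 ↔ Met (pform c d) := by
  obtain ⟨q, h, ⟨e⟩, hq⟩ := exists_rep m c d
  rw [← hq, cls_eq_zero_iff]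
  exact ⟨fun h => h.iso e, fun h => h.iso e.symm⟩

theorem cls_decomp {q : QF F} (h : q.Nonsingular) :
    ∃ (m : ℕ) (c d : Fin m → F), cls q h = ∑ i, sym (c i) (d i) := by
  obtain ⟨m, c, d, ⟨e⟩, -⟩ := decomp_aux _ (Qf q) ((nonsing_iff _).1 h) rfl
  obtain ⟨q', h', ⟨e'⟩, hq'⟩ := exists_rep m c d
  exact ⟨m, c, d, by rw [← hq']; exact cls_iso _ _ (e.trans e'.symm)⟩

end witt
end WK


namespace WK
open Module QF

section weq
variable {F : Type*} [Field F]

theorem graph_finrank_le {V V' U U' : Type*} [AddCommGroup V] [Module F V] [AddCommGroup V']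
    [Module F V'] [AddCommGroup U] [Module F U] [AddCommGroup U'] [Module F U']
    [FiniteDimensional F V']
    {A : QuadraticForm F V} {B : QuadraticForm F V'} {Z : QuadraticForm F U}
    {Z' : QuadraticForm F U'} (hA : Nondeg A) (hZ' : ∀ u, Z' u = 0)
    (e : (A.prod Z).IsometryEquiv (B.prod Z')) :
    ∃ g : V →ₗ[F] V', (∀ x, B (g x) = A x) ∧ finrank F V ≤ finrank F V' := by
  let g : V →ₗ[F] V' := (LinearMap.fst F V' U').comp
    ((e.toLinearEquiv : V × U →ₗ[F] V' × U').comp (LinearMap.inl F V U))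
  have hg : ∀ x, B (g x) = A x := by
    intro x
    have h := e.map_app (x, 0)
    rw [QuadraticMap.prod_apply, QuadraticMap.prod_apply, hZ'] at h
    have h' : B (e (x, 0)).1 = A x := by simpa using h
    exact h'
  refine ⟨g, hg, ?_⟩
  refine LinearMap.finrank_le_finrank_of_injective (f := g) ?_
  rw [injective_iff_map_eq_zero]
  intro x hx
  apply hA
  intro y
  rw [QuadraticMap.polar, ← hg, ← hg x, ← hg y, map_add, hx]
  simp

theorem met_of_iso_zero {V V' U U' : Type*} [AddCommGroup V] [Module F V] [AddCommGroup V']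
    [Module F V'] [AddCommGroup U] [Module F U] [AddCommGroup U'] [Module F U'] [CharP F 2]
    [FiniteDimensional F V] [FiniteDimensional F V']
    {A : QuadraticForm F V} {B : QuadraticForm F V'} {Z : QuadraticForm F U}
    {Z' : QuadraticForm F U'} (hA : Nondeg A) (hB : Nondeg B) (hZ : ∀ u, Z u = 0)
    (hZ' : ∀ u, Z' u = 0)
    (e : (A.prod Z).IsometryEquiv (B.prod Z')) : Met (A.prod B) := by
  obtain ⟨g, hg, h1⟩ := graph_finrank_le hA hZ' e
  obtain ⟨_, _, h2⟩ := graph_finrank_le hB hZ e.symm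
  exact Met.graph g (le_antisymm h2 h1) hg

theorem zeros_eval (l : ℕ) (u) : Qf (zeros l : QF F) u = 0 := by
  rw [Qf_apply]
  refine Finset.sum_eq_zero fun i _ => Finset.sum_eq_zero fun j _ => ?_
  have : (zeros l : QF F).c i j = 0 := by
    have h : ∀ i j : Fin l, Matrix.diagonal (fun _ : Fin l => (0 : F)) i j = 0 := by simp
    exact h i j
  rw [this]; simp

variable [CharP F 2]

theorem wittEquiv_iff {q s : QF F} (hq : q.Nonsingular) (hs : s.Nonsingular) :
    WittEquiv q s ↔ cls q hq = cls s hs := by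
  constructor
  · rintro ⟨k, k', l, l', h⟩
    obtain ⟨e⟩ := (isometric_iff _ _).1 h
    have key : ∀ (p : QF F) (k l : ℕ), Nonempty
        ((Qf (p.orthSum ((hyp k).orthSum (zeros l)))).IsometryEquiv
          ((Qf (p.orthSum (hyp k))).prod (Qf (zeros l : QF F)))) := by
      intro p k l
      have e1 := (orthIso p ((hyp k).orthSum (zeros l))).trans
        (prodIso (QuadraticMap.IsometryEquiv.refl (Qf p)) (orthIso (hyp k) (zeros l)))
      have e2 := e1.trans (assocIso (Qf p) (Qf (hyp k)) (Qf (zeros l))).symm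
      exact ⟨e2.trans (prodIso (orthIso p (hyp k)).symm (QuadraticMap.IsometryEquiv.refl _))⟩
    obtain ⟨e1⟩ := key q k l
    obtain ⟨e2⟩ := key s k' l'
    have hq' := nonsing_orth hq (nonsing_hyp k)
    have hs' := nonsing_orth hs (nonsing_hyp k')
    have hM := met_of_iso_zero ((nonsing_iff _).1 hq') ((nonsing_iff _).1 hs')
      (zeros_eval l) (zeros_eval l') ((e1.symm.trans e).trans e2)
    have h1 := (cls_eq_iff hq' hs').2 hM
    rw [← cls_add hq (nonsing_hyp k), ← cls_add hs (nonsing_hyp k'), (cls_eq_zero_iff _).2 (met_hyp k),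
      (cls_eq_zero_iff _).2 (met_hyp k'), add_zero, add_zero] at h1
    exact h1
  · intro h
    have h1 : cls q hq + cls s hs = 0 := by rw [h, wadd_self]
    have h2 := wadd_self (cls s hs)
    rw [cls_add, cls_eq_zero_iff, ← hyperbolic_iff (nonsing_orth hq hs)] at h1
    rw [cls_add, cls_eq_zero_iff, ← hyperbolic_iff (nonsing_orth hs hs)] at h2
    obtain ⟨k, h1⟩ := h1
    obtain ⟨k', h2⟩ := h2
    obtain ⟨e1⟩ := (isometric_iff _ _).1 h1
    obtain ⟨e2⟩ := (isometric_iff _ _).1 h2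
    refine ⟨k', k, 0, 0, (isometric_iff _ _).2 ⟨?_⟩⟩
    let r := fun p : QF F => QuadraticMap.IsometryEquiv.refl (Qf p)
    -- q + (hyp k' + 0) = q + ((s+s)+0)
    have a1 := (orthIso q ((hyp k').orthSum (zeros 0))).trans
      (prodIso (r q) ((orthIso (hyp k') (zeros 0)).trans
        (prodIso (e2.symm.trans (orthIso s s)) (r (zeros 0)))))
    have a2 := (orthIso s ((hyp k).orthSum (zeros 0))).trans
      (prodIso (r s) ((orthIso (hyp k) (zeros 0)).trans
        (prodIso (e1.symm.trans (orthIso q s)) (r (zeros 0)))))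
    have b1 : ((Qf q).prod (((Qf s).prod (Qf s)).prod (Qf (zeros 0)))).IsometryEquiv
        ((Qf s).prod (((Qf q).prod (Qf s)).prod (Qf (zeros 0)))) :=
      ((prodIso (r q) (assocIso (Qf s) (Qf s) (Qf (zeros 0)))).trans
        ((assocIso (Qf q) (Qf s) ((Qf s).prod (Qf (zeros 0)))).symm.trans
          ((prodIso (commIso (Qf q) (Qf s)) (QuadraticMap.IsometryEquiv.refl _)).trans
            (assocIso (Qf s) (Qf q) ((Qf s).prod (Qf (zeros 0))))))).trans
        (prodIso (r s) (assocIso (Qf q) (Qf s) (Qf (zeros 0))).symm)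
    exact (a1.trans b1).trans a2.symm

theorem nonsing_sumList {l : List (QF F)} (h : ∀ q ∈ l, q.Nonsingular) :
    (sumList l).Nonsingular := by
  induction l with
  | nil => exact nonsing_nil
  | cons q l ih =>
    exact nonsing_orth (h q (by simp)) (ih fun p hp => h p (by simp [hp]))

open Classical in
/-- Class, zero for singular forms. -/
noncomputable def cl (q : QF F) : WG F := if h : q.Nonsingular then cls q h else 0

theorem cl_eq {q : QF F} (h : q.Nonsingular) : cl q = cls q h := by
  rw [cl, dif_pos h]

theorem cl_sumList {l : List (QF F)} (h : ∀ q ∈ l, q.Nonsingular) :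
    cl (sumList l) = (l.map cl).sum := by
  induction l with
  | nil => exact cl_eq nonsing_nil
  | cons q l ih =>
    have h1 := h q (by simp)
    have h2 : ∀ p ∈ l, p.Nonsingular := fun p hp => h p (by simp [hp])
    rw [List.map_cons, List.sum_cons, ← ih h2, cl_eq h1, cl_eq (nonsing_sumList h2), cls_add]
    exact cl_eq _

end weq
end WK


namespace WK
open Module QF

section final
variable {F K : Type*} [Field F] [Field K] [Algebra F K] [CharP F 2] [CharP K 2]
  {n : ℕ} {a : Fin n → F} {x : Fin n → K}

theorem exists_phi (hx : ∀ i, x i ^ 2 = algebraMap F K (a i))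
    (hgenK : Algebra.adjoin F (Set.range x) = ⊤) :
    ∃ φ : K →+* F, ∀ t, algebraMap F K (φ t) = t ^ 2 := by
  have h : ∀ t : K, ∃ s : F, algebraMap F K s = t ^ 2 := by
    intro t
    have ht : t ∈ Algebra.adjoin F (Set.range x) := by rw [hgenK]; trivial
    induction ht using Algebra.adjoin_induction with
    | mem t ht => obtain ⟨i, rfl⟩ := ht; exact ⟨a i, (hx i).symm⟩
    | algebraMap r => exact ⟨r ^ 2, by simp⟩
    | add s t _ _ hs ht =>
      obtain ⟨u, hu⟩ := hs
      obtain ⟨v, hv⟩ := ht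
      exact ⟨u + v, by rw [map_add, hu, hv, CharTwo.add_sq]⟩
    | mul s t _ _ hs ht =>
      obtain ⟨u, hu⟩ := hs
      obtain ⟨v, hv⟩ := ht
      exact ⟨u * v, by rw [map_mul, hu, hv, mul_pow]⟩
  choose f hf using h
  have inj := (algebraMap F K).injective
  refine ⟨{ toFun := f, map_one' := ?_, map_mul' := ?_, map_zero' := ?_, map_add' := ?_ }, hf⟩
  · apply inj; rw [hf]; simp
  · intro s t; apply inj; rw [map_mul, hf, hf, hf, mul_pow]
  · apply inj; rw [hf]; simp
  · intro s t; apply inj; rw [map_add, hf, hf, hf, CharTwo.add_sq]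

theorem phi_move {W : Type*} [AddCommGroup W] (π : WG F →+ W) (hW : ∀ w : W, w + w = 0)
    (ha : ∀ i, a i ≠ 0)
    (h2 : ∀ i w, π (w + sc (a i) (ha i) w) = 0)
    (hx : ∀ i, x i ^ 2 = algebraMap F K (a i))
    (hgenK : Algebra.adjoin F (Set.range x) = ⊤)
    (φ : K →+* F) (hφ : ∀ t, algebraMap F K (φ t) = t ^ 2) (t : K) :
    ∀ c d, π (sym (c * φ t) d) = π (sym c (φ t * d)) := by
  have inj := (algebraMap F K).injective
  have ht : t ∈ Algebra.adjoin F (Set.range x) := by rw [hgenK]; trivial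
  induction ht using Algebra.adjoin_induction with
  | mem t ht =>
    obtain ⟨i, rfl⟩ := ht
    intro c d
    have e : φ (x i) = a i := inj (by rw [hφ, hx])
    have h := h2 i (sym c (a i * d))
    rw [sc_sym, mul_div_cancel_left₀ _ (ha i), map_add] at h
    rw [e, mul_comm c]
    have h' := hW (π (sym c (a i * d)))
    exact add_left_cancel (h.trans h'.symm)
  | algebraMap r =>
    intro c d
    have e : φ (algebraMap F K r) = r ^ 2 := inj (by rw [hφ, map_pow])
    rw [e, sym_move_sq]
  | add s t _ _ hs ht =>
    intro c d
    rw [map_add, mul_add, add_mul, sym_add_left, sym_add_right, map_add, map_add, hs, ht]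
  | mul s t _ _ hs ht =>
    intro c d
    rw [map_mul, ← mul_assoc, ht, hs, mul_assoc]

theorem mkLam {W : Type*} [AddCommGroup W] (π : WG F →+ W) (hW : ∀ w : W, w + w = 0) (b : F)
    (h1 : ∀ c, c ≠ 0 → π (sym c (b / c)) = 0)
    (φ : K →+* F) (hφ : ∀ t, algebraMap F K (φ t) = t ^ 2)
    (hP : ∀ t c d, π (sym (c * φ t) d) = π (sym c (φ t * d))) :
    ∃ D : LamData F K W φ b, ∀ c d, D.lam c (algebraMap F K d) = π (sym c d) := by
  have inj := (algebraMap F K).injective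
  have e : ∀ r, φ (algebraMap F K r) = r ^ 2 := fun r => inj (by rw [hφ, map_pow])
  have hs : ∀ t c c', π (sym c (c' * φ t)) = π (sym c' (c * φ t)) := by
    intro t c c'
    rw [mul_comm c', ← hP, sym_comm]
  refine ⟨{ lam := AddMonoidHom.mk' (fun c => AddMonoidHom.mk' (fun d => π (sym c (c * φ d))) ?_) ?_
            two := hW, h1 := ?_, h2 := ?_, h3 := ?_, h4 := ?_ }, ?_⟩
  · intro d d'
    rw [map_add, mul_add, sym_add_right, map_add]
  · intro c c'
    ext d
    simp only [AddMonoidHom.mk'_apply, AddMonoidHom.add_apply]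
    rw [add_mul, sym_add_left, sym_add_right, sym_add_right, map_add, map_add, map_add, hs d c c']
    have := hW (π (sym c' (c * φ d)))
    calc _ = (π (sym c (c * φ d)) + π (sym c' (c' * φ d))) +
        (π (sym c' (c * φ d)) + π (sym c' (c * φ d))) := by abel
      _ = _ := by rw [this, add_zero]
  · intro c r d
    simp only [AddMonoidHom.mk'_apply]
    rw [hP, map_mul, map_pow]
    congr 2; ring
  · intro c c' r
    simp only [AddMonoidHom.mk'_apply]
    rw [map_mul, map_mul, e, e, map_pow, ← mul_pow, ← mul_pow, sym_sq, sym_sq, mul_comm (φ r),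
      hs, mul_comm c]
  · intro c x
    simp only [AddMonoidHom.mk'_apply]
    rw [map_add, map_mul, e, map_pow, ← mul_pow, mul_add, sym_add_right, sym_sq, map_add,
      mul_comm c, hW]
  · intro c hc
    simp only [AddMonoidHom.mk'_apply]
    rw [map_div₀, e, e, ← div_pow, sym_sq, h1 c hc]
  · intro c d
    simp only [AddMonoidHom.mk'_apply]
    rw [e, sym_sq]

/-- The subgroup on the right hand side. -/
def NN (a : Fin n → F) (ha : ∀ i, a i ≠ 0) (b : F) : AddSubgroup (WG F) where
  carrier := {w | ∃ (bs : List F) (τ : Fin n → WG F), (∀ c ∈ bs, c ≠ 0) ∧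
    w = (bs.map fun c => sym c (b / c)).sum + ∑ i, (τ i + sc (a i) (ha i) (τ i))}
  zero_mem' := ⟨[], 0, by simp, by simp⟩
  add_mem' := by
    rintro _ _ ⟨bs, τ, h, rfl⟩ ⟨bs', τ', h', rfl⟩
    refine ⟨bs ++ bs', τ + τ', ?_, ?_⟩
    · intro c hc
      rcases List.mem_append.1 hc with hc | hc
      · exact h c hc
      · exact h' c hc
    · simp only [List.map_append, List.sum_append, Pi.add_apply, map_add, Finset.sum_add_distrib]
      abel
  neg_mem' := fun {w} h => by rw [wneg]; exact h

variable {L : Type*} [Field L] [Algebra K L] [Algebra F L] [IsScalarTower F K L] [CharP L 2]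

theorem kernel_iff (ha : ∀ i, a i ≠ 0) (hx : ∀ i, x i ^ 2 = algebraMap F K (a i))
    (hgenK : Algebra.adjoin F (Set.range x) = ⊤)
    (b : F) (β : L) (hβ : β ^ 2 + β + algebraMap F L b = 0)
    (hgenL : Algebra.adjoin K {β} = ⊤) (w : WG F) :
    res (algebraMap F L) w = 0 ↔ w ∈ NN a ha b := by
  have htow : ∀ r, algebraMap F L r = algebraMap K L (algebraMap F K r) :=
    IsScalarTower.algebraMap_apply F K L
  constructor
  · intro hw
    obtain ⟨φ, hφ⟩ := exists_phi hx hgenK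
    let π := QuotientAddGroup.mk' (NN a ha b)
    have hπ : ∀ w, w ∈ NN a ha b → π w = 0 := fun w hw =>
      (QuotientAddGroup.eq_zero_iff w).2 hw
    have hW : ∀ w : WG F ⧸ NN a ha b, w + w = 0 := by
      intro w
      induction w using QuotientAddGroup.induction_on with
      | H z => rw [← QuotientAddGroup.mk_add, wadd_self, QuotientAddGroup.mk_zero]
    have h1 : ∀ c, c ≠ 0 → π (sym c (b / c)) = 0 := fun c hc =>
      hπ _ ⟨[c], 0, by simpa using hc, by simp⟩
    have h2 : ∀ i w, π (w + sc (a i) (ha i) w) = 0 := fun i w =>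
      hπ _ ⟨[], Pi.single i w, by simp, by
        rw [Finset.sum_eq_single i]
        · simp
        · intro j _ hj
          simp [Pi.single_eq_of_ne hj]
        · simp⟩
    obtain ⟨D, hD⟩ := mkLam π hW b h1 φ hφ (phi_move π hW ha h2 hx hgenK φ hφ)
    have hL : ∀ z : L, ∃ s t : K, z = algebraMap K L s + β * algebraMap K L t := by
      intro z
      have hz : z ∈ Algebra.adjoin K {β} := by rw [hgenL]; trivial
      have h2 : (2 : L) = 0 := CharTwo.two_eq_zero
      rw [htow] at hβ
      induction hz using Algebra.adjoin_induction with
      | mem t ht => exact ⟨0, 1, by rw [Set.mem_singleton_iff.1 ht]; simp⟩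
      | algebraMap r => exact ⟨r, 0, by simp⟩
      | add y z _ _ hy hz =>
        obtain ⟨s, t, rfl⟩ := hy
        obtain ⟨s', t', rfl⟩ := hz
        exact ⟨s + s', t + t', by simp; ring⟩
      | mul y z _ _ hy hz =>
        obtain ⟨s, t, rfl⟩ := hy
        obtain ⟨s', t', rfl⟩ := hz
        refine ⟨s * s' + algebraMap F K b * t * t', s * t' + t * s' + t * t', ?_⟩
        simp only [map_add, map_mul]
        linear_combination (algebraMap K L t * algebraMap K L t') * hβ -
          (algebraMap K L t * algebraMap K L t') * (β + algebraMap K L (algebraMap F K b)) * h2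
    induction w using WG.ind with | h q hq => ?_
    obtain ⟨m, c, d, hcd⟩ := cls_decomp hq
    rw [hcd, map_sum] at hw
    simp only [res_sym] at hw
    rw [sum_sym_eq_zero_iff] at hw
    have hM : Met (LF (F := F) (K := K) L c fun i => algebraMap F K (d i)) := by
      unfold LF
      simp only [← htow]
      exact hw
    have h0 := thmM D hφ β (by rw [← htow]; exact hβ) hL m c _ hM
    simp only [hD] at h0
    rw [← map_sum, ← hcd] at h0
    exact (QuotientAddGroup.eq_zero_iff _).1 h0
  · rintro ⟨bs, τ, hbs, rfl⟩
    have h1 : ∀ c ∈ bs, res (algebraMap F L) (sym c (b / c)) = 0 := by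
      intro c hc
      have hc' : algebraMap F L c ≠ 0 := by simpa using hbs c hc
      rw [res_sym, sym_eq_zero_iff]
      refine plane_met_of_isotropic _ _ β (algebraMap F L c) (fun h => hc' (Prod.ext_iff.1 h).2) ?_
      rw [map_div₀]
      field_simp
      linear_combination (algebraMap F L c) * hβ
    have h2 : ∀ i, res (algebraMap F L) (τ i + sc (a i) (ha i) (τ i)) = 0 := by
      intro i
      rw [map_add, res_sc]
      have e : algebraMap F L (a i) = (algebraMap K L (x i)) ^ 2 := by
        rw [htow, ← hx, map_pow]
      have key : ∀ (u : L) (hu : u ≠ 0) (w : WG L), u = (algebraMap K L (x i)) ^ 2 →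
          sc u hu w = w := by
        rintro u hu w rfl
        exact sc_sq _ _ _
      rw [key _ _ _ e, wadd_self]
    rw [map_add, map_sum, Finset.sum_eq_zero fun i _ => h2 i, add_zero, map_list_sum, List.map_map]
    apply List.sum_eq_zero
    intro y hy
    obtain ⟨c, hc, rfl⟩ := List.mem_map.1 hy
    exact h1 c hc

theorem cl_rhs (ha : ∀ i, a i ≠ 0) (b : F) (bs : List F) (hbs : ∀ c ∈ bs, c ≠ 0)
    (τ : Fin n → QF F) (hτ : ∀ i, (τ i).Nonsingular) :
    ∃ h, cls ((sumList (bs.map fun c => smul c (bin 1 b))).orthSum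
            (sumList (List.ofFn fun i => (τ i).orthSum (smul (a i) (τ i))))) h =
      (bs.map fun c => sym c (b / c)).sum +
        ∑ i, (cls (τ i) (hτ i) + sc (a i) (ha i) (cls (τ i) (hτ i))) := by
  have hl : ∀ q ∈ bs.map (fun c => smul c (bin 1 b)), q.Nonsingular := by
    intro q hq
    obtain ⟨c, hc, rfl⟩ := List.mem_map.1 hq
    exact nonsing_smul (hbs c hc) (nonsing_bin 1 b)
  have hr' : ∀ i, ((τ i).orthSum (smul (a i) (τ i))).Nonsingular := fun i =>
    nonsing_orth (hτ i) (nonsing_smul (ha i) (hτ i))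
  have hr : ∀ q ∈ List.ofFn (fun i => (τ i).orthSum (smul (a i) (τ i))), q.Nonsingular := by
    intro q hq
    obtain ⟨i, rfl⟩ := List.mem_ofFn.1 hq
    exact hr' i
  refine ⟨nonsing_orth (nonsing_sumList hl) (nonsing_sumList hr), ?_⟩
  rw [← cls_add (nonsing_sumList hl) (nonsing_sumList hr), ← cl_eq, ← cl_eq, cl_sumList hl,
    cl_sumList hr, List.map_map, List.map_ofFn, List.sum_ofFn]
  congr 1
  · congr 1
    apply List.map_congr_left
    intro c hc
    change cl (smul c (bin 1 b)) = _
    rw [cl_eq (nonsing_smul (hbs c hc) (nonsing_bin 1 b)), ← sc_cls c (hbs c hc) (nonsing_bin 1 b)]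
    have := sc_sym c (hbs c hc) 1 b
    rw [mul_one] at this
    exact this
  · refine Finset.sum_congr rfl fun i _ => ?_
    change cl ((τ i).orthSum (smul (a i) (τ i))) = _
    rw [cl_eq (hr' i), sc_cls, cls_add]

theorem exists_cls (w : WG F) : ∃ q, ∃ h : q.Nonsingular, cls q h = w := by
  induction w using WG.ind with | h q hq => exact ⟨q, hq, rfl⟩

end final
end WK

open QF in
/-- Aravire–Laghribi, separability degree 2 case.
Let `F` have characteristic 2, `K = F(√a₁,…,√aₙ)` with `aᵢ ∈ F*`, and
`L = K(℘⁻¹(b))` for some `b ∈ F`, where `℘⁻¹(b)` is a root of `X² + X + b`.  Then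
`W_q(L/F) = W(F) ⊗ [1,b] + Σᵢ ⟨1,aᵢ⟩_b ⊗ W_q(F)`: a nonsingular quadratic form `q`
over `F` becomes hyperbolic over `L` iff `q` is Witt equivalent to
`(⊥ⱼ cⱼ·[1,b]) ⊥ (⊥ᵢ ⟨1,aᵢ⟩_b ⊗ τᵢ)` with `cⱼ ∈ F*` and `τᵢ` nonsingular over `F`. -/
theorem wittKernel_multiquadratic_sep_degree_two
    (F K L : Type*) [Field F] [Field K] [Field L] [Algebra F K] [Algebra K L]
    [Algebra F L] [IsScalarTower F K L] [CharP F 2]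
    (n : ℕ) (a : Fin n → F) (ha : ∀ i, a i ≠ 0)
    (x : Fin n → K) (hx : ∀ i, x i ^ 2 = algebraMap F K (a i))
    (hgenK : Algebra.adjoin F (Set.range x) = ⊤)
    (b : F) (β : L) (hβ : β ^ 2 + β + algebraMap F L b = 0)
    (hgenL : Algebra.adjoin K {β} = ⊤) :
    ∀ q : QF F, q.Nonsingular →
      (Hyperbolic (q.map (algebraMap F L)) ↔
        ∃ (bs : List F) (τ : Fin n → QF F), (∀ c ∈ bs, c ≠ 0) ∧
          (∀ i, (τ i).Nonsingular) ∧
          WittEquiv q ((sumList (bs.map fun c => smul c (bin 1 b))).orthSum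
            (sumList (List.ofFn fun i => (τ i).orthSum (smul (a i) (τ i)))))) := by
  intro q hq
  have : CharP K 2 := charP_of_injective_algebraMap (algebraMap F K).injective 2
  have : CharP L 2 := charP_of_injective_algebraMap (algebraMap F L).injective 2
  have key := WK.kernel_iff ha hx hgenK b β hβ hgenL (WK.cls q hq)
  rw [WK.res_cls, WK.cls_eq_zero_iff, ← WK.hyperbolic_iff (WK.nonsing_map _ hq)] at key
  rw [key]
  constructor
  · rintro ⟨bs, τ, hbs, h⟩
    choose t ht ht' using fun i => WK.exists_cls (τ i)
    obtain ⟨hs, e⟩ := WK.cl_rhs ha b bs hbs t ht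
    refine ⟨bs, t, hbs, ht, (WK.wittEquiv_iff hq hs).2 ?_⟩
    rw [h, e]
    simp only [ht']
  · rintro ⟨bs, t, hbs, ht, h⟩
    obtain ⟨hs, e⟩ := WK.cl_rhs ha b bs hbs t ht
    rw [WK.wittEquiv_iff hq hs, e] at h
    exact ⟨bs, fun i => WK.cls (t i) (ht i), hbs, h⟩
end

section
/- Let F be a field of characteristic 2, K/F an extension with K² ⊆ F, a, b ∈ F with a ≠ 0, and x ∈ K*. Then π := ⟨1,x²⟩_b ⊗ [a,b] has coefficients in F (since x² ∈ F*) and lies in the Witt kernel W_q(K/F), and in W_q(F) one has the Witt equivalence [a,b] ⊥ π ∼ [ax², b/x²]. -/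
namespace QF

theorem aux_eval_orthSum {F : Type*} [Field F] (q q' : QF F) (x : Fin (q.dim + q'.dim) → F) :
    (orthSum q q').eval x
      = q.eval (fun i => x (Fin.castAdd _ i)) + q'.eval (fun i => x (Fin.natAdd _ i)) := by
  show (∑ i : Fin (q.dim + q'.dim), ∑ j : Fin (q.dim + q'.dim), (orthSum q q').c i j * x i * x j) = _
  simp only [Fin.sum_univ_add]
  simp [orthSum, eval]

theorem aux_sum {F : Type*} [Field F] {q q' : QF F} {x : Fin (q.dim + q'.dim) → F} {A B : F}
    (h1 : q.eval (fun i => x (Fin.castAdd _ i)) = A)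
    (h2 : q'.eval (fun i => x (Fin.natAdd _ i)) = B) : (orthSum q q').eval x = A + B := by
  rw [aux_eval_orthSum, h1, h2]

theorem aux_eval_bin {F : Type*} [Field F] (a b : F) (x : Fin 2 → F) :
    (bin a b).eval x = a * x 0 * x 0 + x 0 * x 1 + b * x 1 * x 1 := by
  show (∑ i : Fin 2, ∑ j : Fin 2, (!![a, 1; 0, b] : Matrix _ _ F) i j * x i * x j) = _
  simp [Fin.sum_univ_two, add_assoc]

theorem aux_eval_smul {F : Type*} [Field F] (t : F) (q : QF F) (x : Fin q.dim → F) :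
    (smul t q).eval x = t * q.eval x := by
  show (∑ i : Fin q.dim, ∑ j : Fin q.dim, (t * q.c i j) * x i * x j) = _
  simp [eval, Finset.mul_sum, mul_assoc]

theorem aux_eval_nil {F : Type*} [Field F] (x : Fin 0 → F) : (nil : QF F).eval x = 0 := by
  show (∑ i : Fin 0, _) = _
  simp

theorem aux_eval_zeros {F : Type*} [Field F] (x : Fin 0 → F) : (zeros 0 : QF F).eval x = 0 := by
  show (∑ i : Fin 0, _) = _
  simp

theorem aux_eval_hyp_two {F : Type*} [Field F] (y : Fin 4 → F) :
    (hyp 2 : QF F).eval y = y 0 * y 1 + y 2 * y 3 := by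
  refine (aux_sum (q := hypPlane) (q' := orthSum hypPlane nil) (aux_eval_bin 0 0 _)
    (aux_sum (aux_eval_bin 0 0 _) (aux_eval_nil _))).trans ?_
  simp only [zero_mul, zero_add, add_zero]
  rfl

theorem aux_eval_pi {F : Type*} [Field F] (a b t : F) (y : Fin 4 → F) :
    ((bin a b).orthSum (smul t (bin a b))).eval y =
      (a * y 0 * y 0 + y 0 * y 1 + b * y 1 * y 1)
      + t * (a * y 2 * y 2 + y 2 * y 3 + b * y 3 * y 3) :=
  aux_sum (q := bin a b) (q' := smul t (bin a b)) (aux_eval_bin a b _)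
    ((aux_eval_smul t (bin a b) _).trans (congrArg (t * ·) (aux_eval_bin a b _)))

theorem aux_map_orthSum {F K : Type*} [Field F] [Field K] (f : F →+* K) (q q' : QF F) :
    (q.orthSum q').map f = (q.map f).orthSum (q'.map f) := by
  have : ∀ i j : Fin (q.dim + q'.dim),
      ((q.orthSum q').map f).c i j = ((q.map f).orthSum (q'.map f)).c i j := by
    intro i j
    refine Fin.addCases (fun i => ?_) (fun i => ?_) i <;>
    refine Fin.addCases (fun j => ?_) (fun j => ?_) j <;>
    simp [orthSum, map] <;> rfl
  exact congrArg (QF.mk (q.dim + q'.dim)) (funext fun i => funext fun j => this i j)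

theorem aux_map {F K : Type*} [Field F] [Field K] (f : F →+* K) (a b t : F) :
    ((bin a b).orthSum (smul t (bin a b))).map f
      = (bin (f a) (f b)).orthSum (smul (f t) (bin (f a) (f b))) := by
  rw [aux_map_orthSum]
  have h1 : (bin a b).map f = bin (f a) (f b) := by
    refine congrArg (QF.mk 2) (funext fun i => funext fun j => ?_)
    fin_cases i <;> fin_cases j
    · rfl
    · exact map_one f
    · exact map_zero f
    · rfl
  have h2 : (smul t (bin a b)).map f = smul (f t) ((bin a b).map f) := by
    refine congrArg (QF.mk 2) (funext fun i => funext fun j => ?_)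
    exact map_mul f t _
  rw [h2, h1]

theorem aux_eval_left {F : Type*} [Field F] (a b t : F) (y : Fin 6 → F) :
    (orthSum ((bin a b).orthSum ((bin a b).orthSum (smul t (bin a b))))
      (orthSum (hyp 0) (zeros 0))).eval y =
      (a * y 0 * y 0 + y 0 * y 1 + b * y 1 * y 1)
      + ((a * y 2 * y 2 + y 2 * y 3 + b * y 3 * y 3)
      + t * (a * y 4 * y 4 + y 4 * y 5 + b * y 5 * y 5)) := by
  refine (aux_sum (q := (bin a b).orthSum ((bin a b).orthSum (smul t (bin a b))))
      (q' := orthSum nil (zeros 0)) (aux_sum (aux_eval_bin a b _) (aux_eval_pi a b t _))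
      (aux_sum (aux_eval_nil _) (aux_eval_zeros _))).trans ?_
  rw [add_zero, add_zero]
  rfl

theorem aux_eval_right {F : Type*} [Field F] (a b : F) (y : Fin 6 → F) :
    (orthSum (bin a b) (orthSum (hyp 2) (zeros 0))).eval y =
      (a * y 0 * y 0 + y 0 * y 1 + b * y 1 * y 1) + (y 2 * y 3 + y 4 * y 5) := by
  refine (aux_sum (q := bin a b) (q' := orthSum (hyp 2) (zeros 0)) (aux_eval_bin a b _)
    (aux_sum (aux_eval_hyp_two _) (aux_eval_zeros _))).trans ?_
  rw [add_zero]
  rfl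

/-- The change of variables making `[a,b] ⊥ x²[a,b]` hyperbolic. -/
noncomputable def auxEquivFour {K : Type*} [Field K] (a b x : K) (hx : x ≠ 0) :
    (Fin 4 → K) ≃ₗ[K] (Fin 4 → K) where
  toFun y := ![y 0 + x * y 2, a * (y 0 + x * y 2) + y 1, y 1 + x * y 3,
    b * (y 1 + x * y 3) + x * y 2]
  invFun p := ![p 0 - (p 3 - b * p 2), p 1 - a * p 0, (p 3 - b * p 2) / x,
    (p 2 - (p 1 - a * p 0)) / x]
  map_add' y z := by
    ext i; fin_cases i <;> simp <;> ring
  map_smul' c y := by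
    ext i; fin_cases i <;> simp <;> ring
  left_inv y := by
    ext i; fin_cases i <;> simp <;> field_simp <;> ring
  right_inv p := by
    ext i; fin_cases i <;> simp <;> field_simp <;> ring

/-- The change of variables giving `[a,b] ⊥ [a,b] ⊥ t[a,b] ≅ [at,b/t] ⊥ 2ℍ`. -/
noncomputable def auxEquivSix {K : Type*} [Field K] (a b t : K) (ht : t ≠ 0) :
    (Fin 6 → K) ≃ₗ[K] (Fin 6 → K) where
  toFun y := ![y 4, t * y 5, y 0 + y 2, a * (y 0 + y 2) + y 1, y 1 + y 3,
    b * (y 1 + y 3) + y 2]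
  invFun p := ![p 2 - (p 5 - b * p 4), p 3 - a * p 2, p 5 - b * p 4,
    p 4 - (p 3 - a * p 2), p 0, p 1 / t]
  map_add' y z := by
    ext i; fin_cases i <;> simp <;> ring
  map_smul' c y := by
    ext i; fin_cases i <;> simp <;> ring
  left_inv y := by
    ext i; fin_cases i <;> simp [ht]
  right_inv p := by
    ext i; fin_cases i <;> simp <;> field_simp

theorem aux_nonsingular {F : Type*} [Field F] [CharP F 2] (a b t : F) (ht : t ≠ 0) :
    ((bin a b).orthSum (smul t (bin a b))).Nonsingular := by
  have key : ∀ y : Fin 4 → F, (((bin a b).orthSum (smul t (bin a b))).c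
      + ((bin a b).orthSum (smul t (bin a b))).c.transpose).mulVec y
      = ![y 1, y 0, t * y 3, t * y 2] := by
    intro y
    have h2 : ∀ z : F, z + z = 0 := CharTwo.add_self_eq_zero
    have hc : ((bin a b).orthSum (smul t (bin a b))).c =
        (!![a, 1, 0, 0; 0, b, 0, 0; 0, 0, t * a, t * 1; 0, 0, t * 0, t * b] :
          Matrix (Fin 4) (Fin 4) F) := by
      ext i j
      revert i j
      show ∀ i j : Fin 4, _
      intro i j
      fin_cases i <;> fin_cases j <;> rfl
    rw [hc]
    ext i
    revert i
    show ∀ i : Fin 4, _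
    intro i
    have : ((!![a, 1, 0, 0; 0, b, 0, 0; 0, 0, t * a, t * 1; 0, 0, t * 0, t * b] :
          Matrix (Fin 4) (Fin 4) F) + (!![a, 1, 0, 0; 0, b, 0, 0; 0, 0, t * a, t * 1; 0, 0, t * 0, t * b] :
          Matrix (Fin 4) (Fin 4) F).transpose).mulVec y i = (![y 1, y 0, t * y 3, t * y 2] : Fin 4 → F) i := by
      fin_cases i <;> simp [Matrix.mulVec, dotProduct, Fin.sum_univ_four, h2]
    exact this
  intro y hy
  change Fin 4 → F at y
  have h := (key y).symm.trans hy
  have h0 : y 1 = 0 := congrFun h (0 : Fin 4)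
  have h1 : y 0 = 0 := congrFun h (1 : Fin 4)
  have h2 : t * y 3 = 0 := congrFun h (2 : Fin 4)
  have h3 : t * y 2 = 0 := congrFun h (3 : Fin 4)
  have h2' : y 3 = 0 := by simpa [ht] using h2
  have h3' : y 2 = 0 := by simpa [ht] using h3
  have : ∀ i : Fin 4, y i = 0 := by
    intro i; fin_cases i <;> assumption
  exact funext this

end QF

open QF in
/-- Let `F` have characteristic 2, `K/F` an extension with `K² ⊆ F`,
`a, b ∈ F` with `a ≠ 0`, and `x ∈ K*`; let `t ∈ F` with `t = x²` in `K` (such `t`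
exists since `K² ⊆ F`).  Then `π := ⟨1,x²⟩_b ⊗ [a,b] = ⟨1,t⟩_b ⊗ [a,b]` is a
nonsingular quadratic form over `F` lying in the Witt kernel `W_q(K/F)` (it becomes
hyperbolic over `K`), and `[a,b] ⊥ π ∼ [ax², b/x²] = [at, b/t]` in `W_q(F)`. -/
theorem scaling_by_square_relation
    (F K : Type*) [Field F] [Field K] [Algebra F K] [CharP F 2]
    (hK : ∀ x : K, ∃ y : F, algebraMap F K y = x ^ 2)
    (a b : F) (ha : a ≠ 0) (x : K) (hx : x ≠ 0)
    (t : F) (ht : algebraMap F K t = x ^ 2) :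
    ((bin a b).orthSum (smul t (bin a b))).Nonsingular ∧
    Hyperbolic (((bin a b).orthSum (smul t (bin a b))).map (algebraMap F K)) ∧
    WittEquiv ((bin a b).orthSum ((bin a b).orthSum (smul t (bin a b))))
      (bin (a * t) (b / t)) := by
  have ht0 : t ≠ 0 := by
    rintro rfl
    rw [map_zero] at ht
    exact pow_ne_zero 2 hx ht.symm
  have h2F : (2 : F) = 0 := CharTwo.two_eq_zero
  have h2K : (2 : K) = 0 := by
    rw [← map_ofNat (algebraMap F K) 2, h2F, map_zero]
  refine ⟨aux_nonsingular a b t ht0, ⟨2, ?_⟩, ⟨0, 2, 0, 0, ?_⟩⟩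
  · rw [aux_map, ht]
    generalize algebraMap F K a = a
    generalize algebraMap F K b = b
    refine ⟨auxEquivFour a b x hx, fun (y : Fin 4 → K) => ?_⟩
    refine (aux_eval_hyp_two _).trans (Eq.trans ?_ (aux_eval_pi a b (x ^ 2) y).symm)
    change (y 0 + x * y 2) * (a * (y 0 + x * y 2) + y 1) + (y 1 + x * y 3) *
      (b * (y 1 + x * y 3) + x * y 2) = _
    linear_combination (a * x * y 0 * y 2 + b * x * y 1 * y 3 + x * y 1 * y 2) * h2K
  · refine ⟨auxEquivSix a b t ht0, fun (y : Fin 6 → F) => ?_⟩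
    refine (aux_eval_right _ _ _).trans (Eq.trans ?_ (aux_eval_left a b t y).symm)
    change (a * t * y 4 * y 4 + y 4 * (t * y 5) + b / t * (t * y 5) * (t * y 5)) +
      ((y 0 + y 2) * (a * (y 0 + y 2) + y 1) + (y 1 + y 3) * (b * (y 1 + y 3) + y 2)) = _
    have hb : b / t * (t * y 5) * (t * y 5) = t * b * y 5 * y 5 := by field_simp
    rw [hb]
    linear_combination (a * y 0 * y 2 + b * y 1 * y 3 + y 1 * y 2) * h2F
end
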